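/- arXiv:2001.09688 — 7 statements merged into one kernel-verified Lean document; each statement's English description precedes it below -/
import Mathlib

section
/- Let p1, q1, p2, q2 be pairwise distinct reals and X1, X2 ∈ S. Suppose X1', X2' are rank-one K-projections such that for every real λ ∉ {q1, q2} one has A1(λ,X1) A2(λ,X2) = A2(λ,X2') A1(λ,X1') and Ã1(λ,X1) Ã2(λ,X2) = Ã2(λ,X2') Ã1(λ,X1'). Assume (p2−p1)(q2−q1) − (p1−q1)(p2−q2)·tr(K X1 K X2) ≠ 0. Then X1' = α_{12} (1_m − ((p2−q2)/(p2−p1)) X2 K) X1 (1_n − ((p2−q2)/(q1−q2)) K X2) and X2' = α_{12} (1_m − ((p1−q1)/(q2−q1)) X1 K) X2 (1_n − ((p1−q1)/(p1−p2)) K X1), where α_{12} = (1 − ((p1−q1)(p2−q2))/((p2−p1)(q2−q1)) · tr(K X1 K X2))^{-1}; that is, (X1',X2') = R(p1,q1;p2,q2)(X1,X2). -/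
open Matrix

/-- The space of real `m × n` matrices. -/
abbrev Mat (m n : ℕ) := Matrix (Fin m) (Fin n) ℝ

/-- `X` is a rank-one `K`-projection, i.e. `X ∈ S`. -/
def InS {m n : ℕ} (K : Matrix (Fin n) (Fin m) ℝ) (X : Mat m n) : Prop :=
  X * K * X = X ∧ X.rank = 1

/-- `A(p,q,λ,X) = 1ₘ − ((p−q)/(λ−q)) X K`. -/
noncomputable def Amat {m n : ℕ} (K : Matrix (Fin n) (Fin m) ℝ) (p q lam : ℝ) (X : Mat m n) :
    Matrix (Fin m) (Fin m) ℝ :=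
  1 - ((p - q) / (lam - q)) • (X * K)

/-- `Ã(p,q,λ,X) = 1ₙ − ((p−q)/(λ−q)) K X`. -/
noncomputable def Atil {m n : ℕ} (K : Matrix (Fin n) (Fin m) ℝ) (p q lam : ℝ) (X : Mat m n) :
    Matrix (Fin n) (Fin n) ℝ :=
  1 - ((p - q) / (lam - q)) • (K * X)

/-- `B(p,q,λ,X) = 1ₘ + ((p−q)/(λ−p)) X K`. -/
noncomputable def Bmat {m n : ℕ} (K : Matrix (Fin n) (Fin m) ℝ) (p q lam : ℝ) (X : Mat m n) :
    Matrix (Fin m) (Fin m) ℝ :=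
  1 + ((p - q) / (lam - p)) • (X * K)

/-- `B̃(p,q,λ,X) = 1ₙ + ((p−q)/(λ−p)) K X`. -/
noncomputable def Btil {m n : ℕ} (K : Matrix (Fin n) (Fin m) ℝ) (p q lam : ℝ) (X : Mat m n) :
    Matrix (Fin n) (Fin n) ℝ :=
  1 + ((p - q) / (lam - p)) • (K * X)

/-- `α₁₂⁻¹ = 1 − ((p1−q1)(p2−q2))/((p2−p1)(q2−q1)) · tr(K X1 K X2)`. -/
noncomputable def adenom {m n : ℕ} (K : Matrix (Fin n) (Fin m) ℝ) (p1 q1 p2 q2 : ℝ)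
    (X1 X2 : Mat m n) : ℝ :=
  1 - (p1 - q1) * (p2 - q2) / ((p2 - p1) * (q2 - q1)) * (K * X1 * K * X2).trace

/-- The Yang–Baxter map `R(p1,q1;p2,q2)`. -/
noncomputable def Rmap {m n : ℕ} (K : Matrix (Fin n) (Fin m) ℝ) (p1 q1 p2 q2 : ℝ)
    (X : Mat m n × Mat m n) : Mat m n × Mat m n :=
  ((adenom K p1 q1 p2 q2 X.1 X.2)⁻¹ •
      ((1 - ((p2 - q2) / (p2 - p1)) • (X.2 * K)) * X.1 *
        (1 - ((p2 - q2) / (q1 - q2)) • (K * X.2))),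
   (adenom K p1 q1 p2 q2 X.1 X.2)⁻¹ •
      ((1 - ((p1 - q1) / (q2 - q1)) • (X.1 * K)) * X.2 *
        (1 - ((p1 - q1) / (p1 - p2)) • (K * X.1))))

/-- Trace denominator of the first component of the map `T`:
`tr[A₂(p1,X2) X1 B̃₂(q1,X2) K]`. -/
noncomputable def Tden1 {m n : ℕ} (K : Matrix (Fin n) (Fin m) ℝ) (p1 q1 p2 q2 : ℝ)
    (X1 X2 : Mat m n) : ℝ :=
  (Amat K p2 q2 p1 X2 * X1 * Btil K p2 q2 q1 X2 * K).trace

/-- Trace denominator of the second component of the map `T`: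
`tr[A₁(p2,X1) X2 B̃₁(q2,X1) K]`. -/
noncomputable def Tden2 {m n : ℕ} (K : Matrix (Fin n) (Fin m) ℝ) (p1 q1 p2 q2 : ℝ)
    (X1 X2 : Mat m n) : ℝ :=
  (Amat K p1 q1 p2 X1 * X2 * Btil K p1 q1 q2 X1 * K).trace

/-- The (non-Yang–Baxter) map `T(p1,q1;p2,q2)`. -/
noncomputable def Tmap {m n : ℕ} (K : Matrix (Fin n) (Fin m) ℝ) (p1 q1 p2 q2 : ℝ)
    (X : Mat m n × Mat m n) : Mat m n × Mat m n :=
  ((Tden1 K p1 q1 p2 q2 X.1 X.2)⁻¹ • (Amat K p2 q2 p1 X.2 * X.1 * Btil K p2 q2 q1 X.2),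
   (Tden2 K p1 q1 p2 q2 X.1 X.2)⁻¹ • (Amat K p1 q1 p2 X.1 * X.2 * Btil K p1 q1 q2 X.1))

/-- Trace denominator of the first component of `T⁻¹`: `tr[B₂(q1,X2) X1 Ã₂(p1,X2) K]`. -/
noncomputable def Tinvden1 {m n : ℕ} (K : Matrix (Fin n) (Fin m) ℝ) (p1 q1 p2 q2 : ℝ)
    (X1 X2 : Mat m n) : ℝ :=
  (Bmat K p2 q2 q1 X2 * X1 * Atil K p2 q2 p1 X2 * K).trace

/-- Trace denominator of the second component of `T⁻¹`: `tr[B₁(q2,X1) X2 Ã₁(p2,X1) K]`. -/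
noncomputable def Tinvden2 {m n : ℕ} (K : Matrix (Fin n) (Fin m) ℝ) (p1 q1 p2 q2 : ℝ)
    (X1 X2 : Mat m n) : ℝ :=
  (Bmat K p1 q1 q2 X1 * X2 * Atil K p1 q1 p2 X1 * K).trace

/-- The map `Tinv(p1,q1;p2,q2)`, the inverse of `T(p1,q1;p2,q2)`. -/
noncomputable def Tinvmap {m n : ℕ} (K : Matrix (Fin n) (Fin m) ℝ) (p1 q1 p2 q2 : ℝ)
    (X : Mat m n × Mat m n) : Mat m n × Mat m n :=
  ((Tinvden1 K p1 q1 p2 q2 X.1 X.2)⁻¹ • (Bmat K p2 q2 q1 X.2 * X.1 * Atil K p2 q2 p1 X.2),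
   (Tinvden2 K p1 q1 p2 q2 X.1 X.2)⁻¹ • (Bmat K p1 q1 q2 X.1 * X.2 * Atil K p1 q1 p2 X.1))

/-- Trace denominator of the first component of `R⁻¹`: `tr[A₂(q1,X2) X1 B̃₂(p1,X2) K]`. -/
noncomputable def Rinvden1 {m n : ℕ} (K : Matrix (Fin n) (Fin m) ℝ) (p1 q1 p2 q2 : ℝ)
    (X1 X2 : Mat m n) : ℝ :=
  (Amat K p2 q2 q1 X2 * X1 * Btil K p2 q2 p1 X2 * K).trace

/-- Trace denominator of the second component of `R⁻¹`: `tr[B₁(p2,X1) X2 Ã₁(q2,X1) K]`. -/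
noncomputable def Rinvden2 {m n : ℕ} (K : Matrix (Fin n) (Fin m) ℝ) (p1 q1 p2 q2 : ℝ)
    (X1 X2 : Mat m n) : ℝ :=
  (Bmat K p1 q1 p2 X1 * X2 * Atil K p1 q1 q2 X1 * K).trace

/-- The map `Rinv(p1,q1;p2,q2)`, the inverse of `R(p1,q1;p2,q2)`. -/
noncomputable def Rinvmap {m n : ℕ} (K : Matrix (Fin n) (Fin m) ℝ) (p1 q1 p2 q2 : ℝ)
    (X : Mat m n × Mat m n) : Mat m n × Mat m n :=
  ((Rinvden1 K p1 q1 p2 q2 X.1 X.2)⁻¹ • (Amat K p2 q2 q1 X.2 * X.1 * Btil K p2 q2 p1 X.2),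
   (Rinvden2 K p1 q1 p2 q2 X.1 X.2)⁻¹ • (Bmat K p1 q1 p2 X.1 * X.2 * Atil K p1 q1 q2 X.1))

/-- `R` acting on components 1 and 2 of a triple. -/
noncomputable def R12t {m n : ℕ} (K : Matrix (Fin n) (Fin m) ℝ) (p1 q1 p2 q2 : ℝ)
    (X : Mat m n × Mat m n × Mat m n) : Mat m n × Mat m n × Mat m n :=
  ((Rmap K p1 q1 p2 q2 (X.1, X.2.1)).1, (Rmap K p1 q1 p2 q2 (X.1, X.2.1)).2, X.2.2)

/-- `R` acting on components 1 and 3 of a triple. -/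
noncomputable def R13t {m n : ℕ} (K : Matrix (Fin n) (Fin m) ℝ) (p1 q1 p3 q3 : ℝ)
    (X : Mat m n × Mat m n × Mat m n) : Mat m n × Mat m n × Mat m n :=
  ((Rmap K p1 q1 p3 q3 (X.1, X.2.2)).1, X.2.1, (Rmap K p1 q1 p3 q3 (X.1, X.2.2)).2)

/-- `R` acting on components 2 and 3 of a triple. -/
noncomputable def R23t {m n : ℕ} (K : Matrix (Fin n) (Fin m) ℝ) (p2 q2 p3 q3 : ℝ)
    (X : Mat m n × Mat m n × Mat m n) : Mat m n × Mat m n × Mat m n :=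
  (X.1, Rmap K p2 q2 p3 q3 (X.2.1, X.2.2))

/-- `T` acting on components 1 and 2 of a triple. -/
noncomputable def T12t {m n : ℕ} (K : Matrix (Fin n) (Fin m) ℝ) (p1 q1 p2 q2 : ℝ)
    (X : Mat m n × Mat m n × Mat m n) : Mat m n × Mat m n × Mat m n :=
  ((Tmap K p1 q1 p2 q2 (X.1, X.2.1)).1, (Tmap K p1 q1 p2 q2 (X.1, X.2.1)).2, X.2.2)

/-- `T` acting on components 1 and 3 of a triple. -/
noncomputable def T13t {m n : ℕ} (K : Matrix (Fin n) (Fin m) ℝ) (p1 q1 p3 q3 : ℝ)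
    (X : Mat m n × Mat m n × Mat m n) : Mat m n × Mat m n × Mat m n :=
  ((Tmap K p1 q1 p3 q3 (X.1, X.2.2)).1, X.2.1, (Tmap K p1 q1 p3 q3 (X.1, X.2.2)).2)

/-- `T` acting on components 2 and 3 of a triple. -/
noncomputable def T23t {m n : ℕ} (K : Matrix (Fin n) (Fin m) ℝ) (p2 q2 p3 q3 : ℝ)
    (X : Mat m n × Mat m n × Mat m n) : Mat m n × Mat m n × Mat m n :=
  (X.1, Tmap K p2 q2 p3 q3 (X.2.1, X.2.2))

/-- `T⁻¹` acting on components 2 and 3 of a triple. -/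
noncomputable def Tinv23t {m n : ℕ} (K : Matrix (Fin n) (Fin m) ℝ) (p2 q2 p3 q3 : ℝ)
    (X : Mat m n × Mat m n × Mat m n) : Mat m n × Mat m n × Mat m n :=
  (X.1, Tinvmap K p2 q2 p3 q3 (X.2.1, X.2.2))

/-- `R⁻¹` acting on components 2 and 3 of a triple. -/
noncomputable def Rinv23t {m n : ℕ} (K : Matrix (Fin n) (Fin m) ℝ) (p2 q2 p3 q3 : ℝ)
    (X : Mat m n × Mat m n × Mat m n) : Mat m n × Mat m n × Mat m n :=
  (X.1, Rinvmap K p2 q2 p3 q3 (X.2.1, X.2.2))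

section helpers

lemma rank_one_sandwich {m n : ℕ} (X : Matrix (Fin m) (Fin n) ℝ) (h : X.rank = 1)
    (Z : Matrix (Fin n) (Fin m) ℝ) : X * Z * X = (Z * X).trace • X := by
  obtain ⟨u, v, rfl⟩ : ∃ u v, X = vecMulVec u v := by
    rw [Matrix.rank_eq_finrank_span_cols, finrank_eq_one_iff'] at h
    obtain ⟨u, -, hu⟩ := h
    have : ∀ j, ∃ c : ℝ, c • (u : Fin m → ℝ) = X.col j := by
      intro j
      obtain ⟨c, hc⟩ := hu ⟨X.col j, Submodule.subset_span ⟨j, rfl⟩⟩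
      exact ⟨c, by simpa using congrArg Subtype.val hc⟩
    choose v hv using this
    refine ⟨u, v, ?_⟩
    ext i j
    have := congrFun (hv j) i
    simp [vecMulVec_apply] at this ⊢
    rw [← this, mul_comm]
  rw [Matrix.mul_assoc, mul_vecMulVec, vecMulVec_mul_vecMulVec, trace_vecMulVec]
  ext i j
  simp [vecMulVec_apply, dotProduct_comm]
  try ring

lemma trace_eq_one {m n : ℕ} (K : Matrix (Fin n) (Fin m) ℝ) (X : Mat m n) (h : InS K X) :
    (K * X).trace = 1 := by
  have h1 := rank_one_sandwich X h.2 K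
  rw [h.1] at h1
  have hne : X ≠ 0 := by
    rintro rfl
    have := h.2
    simp at this
  have h2 : ((K * X).trace - 1) • X = 0 := by
    rw [sub_smul, ← h1, one_smul, sub_self]
  rcases smul_eq_zero.mp h2 with h3 | h3
  · linarith
  · exact absurd h3 hne

lemma factor_inv {R : Type*} [Ring R] [Algebra ℝ R] (P : R) (hP : P * P = P) (p q l : ℝ)
    (h1 : l ≠ p) (h2 : l ≠ q) :
    (1 - ((p - q) / (l - q)) • P) * (1 + ((p - q) / (l - p)) • P) = 1 ∧
    (1 + ((p - q) / (l - p)) • P) * (1 - ((p - q) / (l - q)) • P) = 1 := by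
  have e1 : l - p ≠ 0 := sub_ne_zero.mpr h1
  have e2 : l - q ≠ 0 := sub_ne_zero.mpr h2
  constructor <;>
  · simp only [mul_sub, sub_mul, mul_add, add_mul, smul_mul_assoc, mul_smul_comm, mul_one, one_mul,
      smul_smul, hP]
    match_scalars <;> field_simp <;> ring

lemma lax_residues {R : Type*} [Ring R] [Algebra ℝ R] (P1 P2 P1' P2' : R) (p1 q1 p2 q2 : ℝ)
    (hpq1 : p1 ≠ q1) (hpq2 : p2 ≠ q2) (hp1q2 : p1 ≠ q2) (hp2q1 : p2 ≠ q1) (hp : p1 ≠ p2)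
    (hq : q1 ≠ q2)
    (h : ∀ l : ℝ, l ≠ q1 → l ≠ q2 →
      (1 - ((p1 - q1) / (l - q1)) • P1) * (1 - ((p2 - q2) / (l - q2)) • P2) =
      (1 - ((p2 - q2) / (l - q2)) • P2') * (1 - ((p1 - q1) / (l - q1)) • P1')) :
    P1 * (1 - ((p2 - q2) / (q1 - q2)) • P2) = (1 - ((p2 - q2) / (q1 - q2)) • P2') * P1' ∧
    (1 - ((p1 - q1) / (q2 - q1)) • P1) * P2 = P2' * (1 - ((p1 - q1) / (q2 - q1)) • P1') := by
  have key : ∀ l : ℝ, l ≠ q1 → l ≠ q2 →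
      ((p1 - q1) * (l - q2)) • P1 + ((p2 - q2) * (l - q1)) • P2
        - ((p1 - q1) * (p2 - q2)) • (P1 * P2) =
      ((p1 - q1) * (l - q2)) • P1' + ((p2 - q2) * (l - q1)) • P2'
        - ((p1 - q1) * (p2 - q2)) • (P2' * P1') := by
    intro l h1 h2
    have e1 : l - q1 ≠ 0 := sub_ne_zero.mpr h1
    have e2 : l - q2 ≠ 0 := sub_ne_zero.mpr h2
    have := h l h1 h2
    simp only [mul_sub, sub_mul, smul_mul_assoc, mul_smul_comm, mul_one, one_mul,
      smul_smul] at this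
    linear_combination (norm := skip) (-((l - q1) * (l - q2))) • this
    match_scalars <;> field_simp <;> ring
  have k1 := key p1 hpq1 hp1q2
  have k2 := key p2 hp2q1 hpq2
  have e0 : p1 - p2 ≠ 0 := sub_ne_zero.mpr hp
  have ext : ∀ l : ℝ,
      ((p1 - q1) * (l - q2)) • P1 + ((p2 - q2) * (l - q1)) • P2
        - ((p1 - q1) * (p2 - q2)) • (P1 * P2) =
      ((p1 - q1) * (l - q2)) • P1' + ((p2 - q2) * (l - q1)) • P2'
        - ((p1 - q1) * (p2 - q2)) • (P2' * P1') := by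
    intro l
    linear_combination (norm := skip) ((l - p2) / (p1 - p2)) • k1 + ((p1 - l) / (p1 - p2)) • k2
    match_scalars <;> field_simp <;> ring
  have f1 : p1 - q1 ≠ 0 := sub_ne_zero.mpr hpq1
  have f2 : p2 - q2 ≠ 0 := sub_ne_zero.mpr hpq2
  have f3 : q1 - q2 ≠ 0 := sub_ne_zero.mpr hq
  have f4 : q2 - q1 ≠ 0 := sub_ne_zero.mpr hq.symm
  simp only [mul_sub, sub_mul, smul_mul_assoc, mul_smul_comm, mul_one, one_mul]
  constructor
  · linear_combination (norm := skip) (1 / ((p1 - q1) * (q1 - q2))) • ext q1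
    match_scalars <;> field_simp <;> ring
  · linear_combination (norm := skip) (1 / ((p2 - q2) * (q2 - q1))) • ext q2
    match_scalars <;> field_simp <;> ring

lemma rank_one_final {m n : ℕ} (K : Matrix (Fin n) (Fin m) ℝ) (X X' : Mat m n)
    (hX : InS K X) (hX' : InS K X') (L : Matrix (Fin m) (Fin m) ℝ) (N : Matrix (Fin n) (Fin n) ℝ)
    (Z1 Z2 : Matrix (Fin n) (Fin m) ℝ) (h1 : X' = L * X * Z1 * X') (h2 : X' = X' * Z2 * X * N) :
    X' = ((K * (L * X * N)).trace)⁻¹ • (L * X * N) := by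
  have e : X' = L * (X * (Z1 * X' * K * X' * Z2) * X) * N := by
    calc X' = X' * K * X' := hX'.1.symm
      _ = (L * X * Z1 * X') * K * (X' * Z2 * X * N) := by rw [← h1, ← h2]
      _ = _ := by simp only [Matrix.mul_assoc]
  rw [rank_one_sandwich X hX.2] at e
  generalize ((Z1 * X' * K * X' * Z2) * X).trace = g at e
  have e' : X' = g • (L * X * N) := by
    rw [e]; simp only [Matrix.mul_smul, Matrix.smul_mul]
  have t := trace_eq_one K X' hX'
  rw [e', Matrix.mul_smul, Matrix.trace_smul, smul_eq_mul] at t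
  rw [← eq_inv_of_mul_eq_one_left t]
  exact e'

lemma trace_formula {m n : ℕ} (K : Matrix (Fin n) (Fin m) ℝ) (X Y : Mat m n)
    (hX : InS K X) (hY : InS K Y) (a b : ℝ) :
    (K * ((1 - a • (Y * K)) * X * (1 - b • (K * Y)))).trace
      = 1 - (a + b - a * b) * (K * X * K * Y).trace := by
  have t1 := trace_eq_one K X hX
  have t2 : (K * (Y * (K * X))).trace = (K * (X * (K * Y))).trace := by
    rw [← Matrix.mul_assoc, Matrix.trace_mul_comm]; simp only [Matrix.mul_assoc]
  have t3 : (K * (Y * (K * (X * (K * Y))))).trace = (K * (X * (K * Y))).trace := by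
    rw [← Matrix.mul_assoc, Matrix.trace_mul_comm]
    have : K * (X * (K * Y)) * (K * Y) = K * X * K * (Y * K * Y) := by
      simp only [Matrix.mul_assoc]
    rw [← Matrix.mul_assoc] at this ⊢
    simp only [Matrix.mul_assoc] at this ⊢
    have hY' := hY.1
    simp only [Matrix.mul_assoc] at hY'
    rw [hY']
  simp only [Matrix.mul_sub, Matrix.sub_mul, Matrix.mul_smul, Matrix.smul_mul, Matrix.mul_one,
    Matrix.one_mul, Matrix.mul_assoc, Matrix.trace_sub, Matrix.trace_smul, smul_eq_mul, t1, t2, t3]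
  ring

end helpers

/-- The refactorization (Lax) equations determine the Yang–Baxter map `R`. -/
theorem lax_representation_determines_R
    (m n : ℕ) (hm : 0 < m) (hn : 0 < n)
    (K : Matrix (Fin n) (Fin m) ℝ) (hK : K.rank = min n m)
    (p1 q1 p2 q2 : ℝ)
    (hdist : List.Pairwise (· ≠ ·) [p1, q1, p2, q2])
    (X1 X2 X1' X2' : Mat m n)
    (hX1 : InS K X1) (hX2 : InS K X2) (hX1' : InS K X1') (hX2' : InS K X2')
    (hden : (p2 - p1) * (q2 - q1) - (p1 - q1) * (p2 - q2) * (K * X1 * K * X2).trace ≠ 0)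
    (hLax : ∀ lam : ℝ, lam ≠ q1 → lam ≠ q2 →
      Amat K p1 q1 lam X1 * Amat K p2 q2 lam X2
        = Amat K p2 q2 lam X2' * Amat K p1 q1 lam X1' ∧
      Atil K p1 q1 lam X1 * Atil K p2 q2 lam X2
        = Atil K p2 q2 lam X2' * Atil K p1 q1 lam X1') :
    (X1', X2') = Rmap K p1 q1 p2 q2 (X1, X2) := by
  simp only [List.pairwise_cons, List.mem_cons, List.not_mem_nil, or_false, forall_eq_or_imp,
    forall_eq] at hdist
  obtain ⟨⟨h11, hp, h12⟩, ⟨h21, hq⟩, h22, -⟩ := hdist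
  have idA : ∀ X : Mat m n, InS K X → (X * K) * (X * K) = X * K := fun X h => by
    rw [← Matrix.mul_assoc, h.1]
  have idB : ∀ X : Mat m n, InS K X → (K * X) * (K * X) = K * X := fun X h => by
    rw [Matrix.mul_assoc, ← Matrix.mul_assoc X, h.1]
  unfold Amat Atil at hLax
  obtain ⟨rA1, rA2⟩ := lax_residues (X1 * K) (X2 * K) (X1' * K) (X2' * K) p1 q1 p2 q2
    h11 h22 h12 h21.symm hp hq (fun l a b => (hLax l a b).1)
  obtain ⟨rB1, rB2⟩ := lax_residues (K * X1) (K * X2) (K * X1') (K * X2') p1 q1 p2 q2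
    h11 h22 h12 h21.symm hp hq (fun l a b => (hLax l a b).2)
  have d1 : p2 - p1 ≠ 0 := sub_ne_zero.mpr hp.symm
  have d2 : q2 - q1 ≠ 0 := sub_ne_zero.mpr hq.symm
  have d3 : p1 - p2 ≠ 0 := sub_ne_zero.mpr hp
  have d4 : q1 - q2 ≠ 0 := sub_ne_zero.mpr hq
  have f1 : p1 - q1 ≠ 0 := sub_ne_zero.mpr h11
  have f2 : p2 - q2 ≠ 0 := sub_ne_zero.mpr h22
  unfold Rmap
  refine Prod.ext ?_ ?_
  · -- first component
    simp only
    -- left factor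
    have hL : X1' = (1 - ((p2 - q2) / (p2 - p1)) • (X2 * K)) * X1 *
        (K * (1 - ((p2 - q2) / (p1 - q2)) • (X2 * K))) * X1' := by
      have h := (hLax p1 h11 h12).1
      rw [div_self f1, one_smul, one_smul] at h
      have hi := (factor_inv (X2 * K) (idA _ hX2) p2 q2 p1 hp h12).2
      have hc : (p2 - q2) / (p1 - p2) = -((p2 - q2) / (p2 - p1)) := by
        rw [← neg_sub p2 p1, div_neg]
      rw [hc, neg_smul, ← sub_eq_add_neg] at hi
      generalize (1 - ((p2 - q2) / (p1 - q2)) • (X2 * K)) = A at h hi ⊢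
      generalize (1 - ((p2 - q2) / (p2 - p1)) • (X2 * K)) = B at hi ⊢
      have h0 : (1 - X1 * K) * A * X1' = 0 := by
        have h3 : (1 - X1' * K) * X1' = 0 := by
          rw [Matrix.sub_mul, Matrix.one_mul, hX1'.1, sub_self]
        rw [h, Matrix.mul_assoc, h3, Matrix.mul_zero]
      rw [Matrix.sub_mul, Matrix.one_mul, Matrix.sub_mul, sub_eq_zero] at h0
      calc X1' = B * (A * X1') := by rw [← Matrix.mul_assoc, hi, Matrix.one_mul]
        _ = _ := by rw [h0]; simp only [Matrix.mul_assoc]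
    have hR : X1' = X1' * ((1 + ((p2 - q2) / (q1 - p2)) • (K * X2')) * K) * X1 *
        (1 - ((p2 - q2) / (q1 - q2)) • (K * X2)) := by
      have hi := (factor_inv (K * X2') (idB _ hX2') p2 q2 q1 h21 hq).2
      generalize (1 - ((p2 - q2) / (q1 - q2)) • (K * X2)) = A at rB1 ⊢
      generalize (1 - ((p2 - q2) / (q1 - q2)) • (K * X2')) = A' at rB1 hi ⊢
      generalize (1 + ((p2 - q2) / (q1 - p2)) • (K * X2')) = B at hi ⊢
      calc X1' = X1' * K * X1' := hX1'.1.symm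
        _ = X1' * ((B * A') * (K * X1')) := by rw [hi, Matrix.one_mul, Matrix.mul_assoc]
        _ = X1' * (B * ((K * X1) * A)) := by rw [rB1]; simp only [Matrix.mul_assoc]
        _ = _ := by simp only [Matrix.mul_assoc]
    have := rank_one_final K X1 X1' hX1 hX1' _ _ _ _ hL hR
    rw [trace_formula K X1 X2 hX1 hX2] at this
    rw [this]
    unfold adenom
    congr 4
    field_simp
    ring
  · simp only
    have hL : X2' = (1 - ((p1 - q1) / (q2 - q1)) • (X1 * K)) * X2 *
        (K * (1 + ((p1 - q1) / (q2 - p1)) • (X1' * K))) * X2' := by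
      have hi := (factor_inv (X1' * K) (idA _ hX1') p1 q1 q2 h12.symm hq.symm).1
      generalize (1 - ((p1 - q1) / (q2 - q1)) • (X1 * K)) = A at rA2 ⊢
      generalize (1 - ((p1 - q1) / (q2 - q1)) • (X1' * K)) = A' at rA2 hi ⊢
      generalize (1 + ((p1 - q1) / (q2 - p1)) • (X1' * K)) = B at hi ⊢
      calc X2' = X2' * K * X2' := hX2'.1.symm
        _ = ((X2' * K) * (A' * B)) * X2' := by rw [hi, Matrix.mul_one]
        _ = ((A * (X2 * K)) * B) * X2' := by rw [rA2]; simp only [Matrix.mul_assoc]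
        _ = _ := by simp only [Matrix.mul_assoc]
    have hR : X2' = X2' * ((1 - ((p1 - q1) / (p2 - q1)) • (K * X1)) * K) * X2 *
        (1 - ((p1 - q1) / (p1 - p2)) • (K * X1)) := by
      have h := (hLax p2 h21.symm h22).2
      rw [div_self f2, one_smul, one_smul] at h
      have hi := (factor_inv (K * X1) (idB _ hX1) p1 q1 p2 hp.symm h21.symm).1
      have hc : (p1 - q1) / (p2 - p1) = -((p1 - q1) / (p1 - p2)) := by
        rw [← neg_sub p1 p2, div_neg]
      rw [hc, neg_smul, ← sub_eq_add_neg] at hi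
      generalize (1 - ((p1 - q1) / (p2 - q1)) • (K * X1)) = A at h hi ⊢
      generalize (1 - ((p1 - q1) / (p1 - p2)) • (K * X1)) = B at hi ⊢
      have h0 : X2' * (A * (1 - K * X2)) = 0 := by
        have h3 : X2' * (1 - K * X2') = 0 := by
          rw [Matrix.mul_sub, Matrix.mul_one, ← Matrix.mul_assoc, hX2'.1, sub_self]
        rw [h, ← Matrix.mul_assoc, h3, Matrix.zero_mul]
      rw [Matrix.mul_sub, Matrix.mul_one, Matrix.mul_sub, sub_eq_zero] at h0
      calc X2' = (X2' * A) * B := by rw [Matrix.mul_assoc, hi, Matrix.mul_one]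
        _ = _ := by rw [h0]; simp only [Matrix.mul_assoc]
    have := rank_one_final K X2 X2' hX2 hX2' _ _ _ _ hL hR
    rw [trace_formula K X2 X1 hX2 hX1] at this
    rw [this]
    have ht : (K * X2 * K * X1).trace = (K * X1 * K * X2).trace := by
      rw [Matrix.mul_assoc (K * X2), Matrix.trace_mul_comm]; simp only [Matrix.mul_assoc]
    unfold adenom
    rw [ht]
    congr 4
    field_simp
    ring
end

section
/- Let p1, p2, p3 be pairwise distinct reals and q1, q2, q3 pairwise distinct reals such that p_i ≠ q_j for all i, j, and let X1, X2, X3 ∈ S. Assume that every α-factor occurring in the compositions below is well defined and nonzero (i.e., each quantity 1 − ((p_i−q_i)(p_j−q_j))/((p_j−p_i)(q_j−q_i))·tr(K Y_i K Y_j) appearing is nonzero). Then R satisfies the Yang–Baxter equation: applying R(p1,q1;p2,q2) to the components (1,2), then R(p1,q1;p3,q3) to the components (1,3), then R(p2,q2;p3,q3) to the components (2,3) of the triple (X1,X2,X3) gives the same result as applying first R(p2,q2;p3,q3) to components (2,3), then R(p1,q1;p3,q3) to components (1,3), then R(p1,q1;p2,q2) to components (1,2). -/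
open Matrix

/-- Polynomial Lax factor `(λ-q) - (p-q) P`. -/
noncomputable def LaxM {A : Type*} [Ring A] [Algebra ℝ A] (p q l : ℝ) (P : A) : A :=
  (l - q) • (1 : A) - (p - q) • P

theorem LaxM_isUnit {A : Type*} [Ring A] [Algebra ℝ A] {p q l : ℝ} {P : A}
    (hP : P * P = P) (h1 : l ≠ p) (h2 : l ≠ q) : IsUnit (LaxM p q l P) := by
  have h1' := sub_ne_zero.2 h1
  have h2' := sub_ne_zero.2 h2
  have e : ∀ x y : ℝ, (x • (1 : A) + y • P) * LaxM p q l P =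
      (x * (l - q)) • (1 : A) + (y * (l - q) - x * (p - q) - y * (p - q)) • P := by
    intro x y
    simp only [LaxM, add_mul, mul_sub, smul_mul_assoc, mul_smul_comm, hP, one_mul, mul_one]
    module
  have e2 : ∀ x y : ℝ, LaxM p q l P * (x • (1 : A) + y • P) =
      (x * (l - q)) • (1 : A) + (y * (l - q) - x * (p - q) - y * (p - q)) • P := by
    intro x y
    simp only [LaxM, mul_add, sub_mul, smul_mul_assoc, mul_smul_comm, hP, one_mul, mul_one]
    module
  have z : (p - q) / ((l - q) * (l - p)) * (l - q) - (l - q)⁻¹ * (p - q)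
      - (p - q) / ((l - q) * (l - p)) * (p - q) = 0 := by
    field_simp
    ring
  refine ⟨⟨LaxM p q l P, (l - q)⁻¹ • (1 : A) + ((p - q) / ((l - q) * (l - p))) • P, ?_, ?_⟩, rfl⟩
  · rw [e2, z, inv_mul_cancel₀ h2']; simp
  · rw [e, z, inv_mul_cancel₀ h2']; simp

theorem lax_uniq {A : Type*} [Ring A] [Algebra ℝ A] {p q : ℝ} (hpq : p ≠ q) {P Q : A}
    (hQ : Q * Q = Q) (G H : ℝ → A)
    (hp : IsUnit (G p)) (hq : IsUnit (G q))
    (ep : G p * LaxM p q p P = H p * LaxM p q p Q)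
    (eq : G q * LaxM p q q P = H q * LaxM p q q Q) : P = Q := by
  have hc := sub_ne_zero.2 hpq
  have ep' : G p * (1 - P) = H p * (1 - Q) := by
    simp only [LaxM, ← smul_sub, mul_smul_comm] at ep
    exact smul_right_injective A hc ep
  have eq' : G q * P = H q * Q := by
    simp only [LaxM, sub_self, zero_smul, zero_sub, mul_neg, mul_smul_comm, neg_inj] at eq
    exact smul_right_injective A hc eq
  have h1 : G p * ((1 - P) * Q) = G p * 0 := by
    rw [← mul_assoc, ep', mul_assoc, sub_mul, one_mul, hQ, sub_self]; simp
  have h2 : G q * (P * (1 - Q)) = G q * 0 := by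
    rw [← mul_assoc, eq', mul_assoc, mul_sub, mul_one, hQ, sub_self]; simp
  have h1' := hp.mul_left_cancel h1
  have h2' := hq.mul_left_cancel h2
  rw [sub_mul, one_mul, sub_eq_zero] at h1'
  rw [mul_sub, mul_one, sub_eq_zero] at h2'
  rw [h2', ← h1']

theorem lax_uniq3 {A : Type*} [Ring A] [Algebra ℝ A] {p1 q1 p2 q2 p3 q3 : ℝ}
    (h12 : p1 ≠ p2) (h13 : p1 ≠ p3) (h23 : p2 ≠ p3)
    (k12 : q1 ≠ q2) (k13 : q1 ≠ q3) (k23 : q2 ≠ q3)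
    (hpq11 : p1 ≠ q1) (hpq12 : p1 ≠ q2) (hpq13 : p1 ≠ q3)
    (hpq21 : p2 ≠ q1) (hpq22 : p2 ≠ q2) (hpq23 : p2 ≠ q3)
    (hpq31 : p3 ≠ q1) (hpq32 : p3 ≠ q2) (hpq33 : p3 ≠ q3)
    {P1 P2 P3 Q1 Q2 Q3 : A} (hP2 : P2 * P2 = P2) (hP3 : P3 * P3 = P3)
    (hQ1 : Q1 * Q1 = Q1) (hQ2 : Q2 * Q2 = Q2) (hQ3 : Q3 * Q3 = Q3)
    (h : ∀ l, LaxM p3 q3 l P3 * LaxM p2 q2 l P2 * LaxM p1 q1 l P1 =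
      LaxM p3 q3 l Q3 * LaxM p2 q2 l Q2 * LaxM p1 q1 l Q1) :
    P1 = Q1 ∧ P2 = Q2 ∧ P3 = Q3 := by
  have e1 : P1 = Q1 := by
    refine lax_uniq hpq11 hQ1 (fun l => LaxM p3 q3 l P3 * LaxM p2 q2 l P2)
      (fun l => LaxM p3 q3 l Q3 * LaxM p2 q2 l Q2) ?_ ?_ (h _) (h _)
    · exact (LaxM_isUnit hP3 h13 hpq13).mul (LaxM_isUnit hP2 h12 hpq12)
    · exact (LaxM_isUnit hP3 hpq31.symm k13).mul (LaxM_isUnit hP2 hpq21.symm k12)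
  subst e1
  have h' : ∀ l, l ≠ p1 → l ≠ q1 → LaxM p3 q3 l P3 * LaxM p2 q2 l P2 =
      LaxM p3 q3 l Q3 * LaxM p2 q2 l Q2 := fun l a b =>
    (LaxM_isUnit hQ1 a b).mul_right_cancel (h l)
  have e2 : P2 = Q2 := by
    refine lax_uniq hpq22 hQ2 (fun l => LaxM p3 q3 l P3)
      (fun l => LaxM p3 q3 l Q3) ?_ ?_ (h' _ h12.symm hpq21) (h' _ hpq12.symm k12.symm)
    · exact (LaxM_isUnit hP3 h23 hpq23)
    · exact (LaxM_isUnit hP3 hpq32.symm k23)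
  subst e2
  have h'' : ∀ l, l ≠ p1 → l ≠ q1 → l ≠ p2 → l ≠ q2 → LaxM p3 q3 l P3 =
      LaxM p3 q3 l Q3 := fun l a b c d =>
    (LaxM_isUnit hQ2 c d).mul_right_cancel (h' l a b)
  have e3 : P3 = Q3 := by
    refine lax_uniq hpq33 hQ3 (fun l => 1) (fun l => 1) isUnit_one isUnit_one ?_ ?_
    · rw [h'' _ h13.symm hpq31 h23.symm hpq32]
    · rw [h'' _ hpq13.symm k13.symm hpq23.symm k23.symm]
  exact ⟨rfl, rfl, e3⟩

theorem lax_refactor {A : Type*} [Ring A] [Algebra ℝ A] {p1 q1 p2 q2 t d : ℝ}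
    (hp : p1 ≠ p2) (hq : q1 ≠ q2) (h1 : p1 ≠ q1) (h2 : p2 ≠ q2)
    {P1 P2 : A} (hP1 : P1 * P1 = P1) (hP2 : P2 * P2 = P2)
    (h121 : P1 * P2 * P1 = t • P1) (h212 : P2 * P1 * P2 = t • P2)
    (hd : d = 1 - (p1 - q1) * (p2 - q2) / ((p2 - p1) * (q2 - q1)) * t) (hd0 : d ≠ 0)
    (P1' P2' : A)
    (e1 : P1' = d⁻¹ • ((1 - ((p2 - q2) / (p2 - p1)) • P2) * P1 *
        (1 - ((p2 - q2) / (q1 - q2)) • P2)))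
    (e2 : P2' = d⁻¹ • ((1 - ((p1 - q1) / (q2 - q1)) • P1) * P2 *
        (1 - ((p1 - q1) / (p1 - p2)) • P1))) (l : ℝ) :
    LaxM p1 q1 l P1 * LaxM p2 q2 l P2 = LaxM p2 q2 l P2' * LaxM p1 q1 l P1' := by
  have r1 : P1 * (P2 * P1) = t • P1 := by rw [← mul_assoc, h121]
  have r2 : P2 * (P1 * P2) = t • P2 := by rw [← mul_assoc, h212]
  have s1 : ∀ x, P1 * (P1 * x) = P1 * x := fun x => by rw [← mul_assoc, hP1]
  have s2 : ∀ x, P2 * (P2 * x) = P2 * x := fun x => by rw [← mul_assoc, hP2]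
  have hp' : p2 - p1 ≠ 0 := sub_ne_zero.2 hp.symm
  have hq' : q2 - q1 ≠ 0 := sub_ne_zero.2 hq.symm
  have hc1 : p1 - q1 ≠ 0 := sub_ne_zero.2 h1
  have hc2 : p2 - q2 ≠ 0 := sub_ne_zero.2 h2
  have ht : t = (1 - d) * ((p2 - p1) * (q2 - q1)) / ((p1 - q1) * (p2 - q2)) := by
    rw [hd]; field_simp; ring
  have n1 : p1 - p2 = - (p2 - p1) := by ring
  have n2 : q1 - q2 = - (q2 - q1) := by ring
  rw [n2] at e1
  rw [n1] at e2
  have E1 : P1' = d⁻¹ • P1 - (d⁻¹ * ((p2 - q2) / (p2 - p1))) • (P2 * P1)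
      + (d⁻¹ * ((p2 - q2) / (q2 - q1))) • (P1 * P2)
      - (d⁻¹ * ((1 - d) * (p2 - q2) / (p1 - q1))) • P2 := by
    rw [e1]
    simp only [sub_mul, mul_sub, smul_mul_assoc, mul_smul_comm, mul_assoc, one_mul, mul_one,
      r1, r2, s1, s2, hP1, hP2]
    rw [ht]
    match_scalars <;> field_simp
  have E2 : P2' = d⁻¹ • P2 - (d⁻¹ * ((p1 - q1) / (q2 - q1))) • (P1 * P2)
      + (d⁻¹ * ((p1 - q1) / (p2 - p1))) • (P2 * P1)
      - (d⁻¹ * ((1 - d) * (p1 - q1) / (p2 - q2))) • P1 := by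
    rw [e2]
    simp only [sub_mul, mul_sub, smul_mul_assoc, mul_smul_comm, mul_assoc, one_mul, mul_one,
      r1, r2, s1, s2, hP1, hP2]
    rw [ht]
    match_scalars <;> field_simp
  rw [E1, E2]
  simp only [LaxM, sub_mul, mul_sub, add_mul, mul_add, smul_mul_assoc, mul_smul_comm, mul_assoc,
    one_mul, mul_one, r1, r2, s1, s2, hP1, hP2]
  rw [ht]
  match_scalars <;> field_simp <;> ring

/-- Rank-one `K`-projections, in trace form. -/
def GoodX {m n : ℕ} (K : Matrix (Fin n) (Fin m) ℝ) (X : Mat m n) : Prop :=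
  (∀ B : Matrix (Fin n) (Fin m) ℝ, X * B * X = (B * X).trace • X) ∧ (K * X).trace = 1

theorem goodX_of_inS {m n : ℕ} {K : Matrix (Fin n) (Fin m) ℝ} {X : Mat m n} (h : InS K X) :
    GoodX K X := by
  obtain ⟨h1, h2⟩ := h
  have hX0 : X ≠ 0 := by rintro rfl; simp at h2
  obtain ⟨u, v, rfl⟩ : ∃ u v, X = vecMulVec u v := by
    rw [Matrix.rank] at h2
    obtain ⟨u, -, hu⟩ := finrank_eq_one_iff'.1 h2
    choose c hc using hu
    refine ⟨u.1, fun j => c ⟨X.mulVecLin (Pi.single j 1), LinearMap.mem_range_self _ _⟩, ?_⟩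
    ext i j
    have := congrFun (congrArg Subtype.val
      (hc ⟨X.mulVecLin (Pi.single j 1), LinearMap.mem_range_self _ _⟩)) i
    simp only [SetLike.val_smul, Pi.smul_apply, smul_eq_mul, Matrix.mulVecLin_apply,
      Matrix.mulVec_single_one, Matrix.col_apply] at this
    rw [vecMulVec_apply, mul_comm, ← this]
    simp
  have key : ∀ B : Matrix (Fin n) (Fin m) ℝ, vecMulVec u v * B * vecMulVec u v =
      (B * vecMulVec u v).trace • vecMulVec u v := by
    intro B
    rw [vecMulVec_mul, vecMulVec_mul_vecMulVec, mul_vecMulVec, trace_vecMulVec]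
    rw [← dotProduct_mulVec, dotProduct_comm]
    ext i j
    simp [vecMulVec_apply]
    ring
  refine ⟨key, ?_⟩
  have := key K
  rw [h1] at this
  have h3 : ((K * vecMulVec u v).trace - 1) • vecMulVec u v = 0 := by
    rw [sub_smul, one_smul, ← this, sub_self]
  rcases smul_eq_zero.1 h3 with h | h
  · linarith
  · exact absurd h hX0

theorem GoodX.idem {m n : ℕ} {K : Matrix (Fin n) (Fin m) ℝ} {X : Mat m n} (h : GoodX K X) :
    X * K * X = X := by rw [h.1, h.2, one_smul]

theorem rank1_mul {m n : ℕ} {X : Mat m n}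
    (h : ∀ B : Matrix (Fin n) (Fin m) ℝ, X * B * X = (B * X).trace • X)
    (c : ℝ) (L : Matrix (Fin m) (Fin m) ℝ) (R : Matrix (Fin n) (Fin n) ℝ)
    (B : Matrix (Fin n) (Fin m) ℝ) :
    (c • (L * X * R)) * B * (c • (L * X * R)) =
      (B * (c • (L * X * R))).trace • (c • (L * X * R)) := by
  have e : (L * X * R) * B * (L * X * R) = L * (X * (R * B * L) * X) * R := by
    simp only [Matrix.mul_assoc]
  have e2 : (B * (L * X * R)).trace = (R * B * L * X).trace := by
    rw [← Matrix.mul_assoc, trace_mul_comm]; simp only [Matrix.mul_assoc]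
  simp only [Matrix.smul_mul, Matrix.mul_smul, trace_smul]
  rw [e, h, e2]
  simp only [Matrix.smul_mul, Matrix.mul_smul, smul_smul, smul_eq_mul]
  congr 1
  ring

theorem adenom_symm {m n : ℕ} (K : Matrix (Fin n) (Fin m) ℝ) (p1 q1 p2 q2 : ℝ) (X1 X2 : Mat m n) :
    adenom K p1 q1 p2 q2 X1 X2 = adenom K p2 q2 p1 q1 X2 X1 := by
  unfold adenom
  have : (K * X1 * K * X2).trace = (K * X2 * K * X1).trace := by
    rw [Matrix.mul_assoc (K * X1), trace_mul_comm]; simp only [Matrix.mul_assoc]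
  rw [this]
  congr 2
  congr 1 <;> ring

theorem good_aux {m n : ℕ} {K : Matrix (Fin n) (Fin m) ℝ} {p1 q1 p2 q2 : ℝ}
    (a b : ℝ) (hab : a + b - a * b = (p1 - q1) * (p2 - q2) / ((p2 - p1) * (q2 - q1)))
    {X1 X2 : Mat m n} (h1 : GoodX K X1) (h2 : GoodX K X2)
    (hd : adenom K p1 q1 p2 q2 X1 X2 ≠ 0) :
    GoodX K ((adenom K p1 q1 p2 q2 X1 X2)⁻¹ • ((1 - a • (X2 * K)) * X1 * (1 - b • (K * X2)))) := by
  refine ⟨rank1_mul h1.1 _ _ _, ?_⟩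
  rw [Matrix.mul_smul, trace_smul, smul_eq_mul, inv_mul_eq_one₀ hd]
  have i2 := h2.idem
  have t1 : (K * (X2 * K * X1)).trace = (K * X1 * K * X2).trace := by
    rw [Matrix.mul_assoc X2, ← Matrix.mul_assoc, trace_mul_comm]; simp only [Matrix.mul_assoc]
  have t2 : (K * (X1 * (K * X2))).trace = (K * X1 * K * X2).trace := by
    simp only [Matrix.mul_assoc]
  have t3 : (K * (X2 * K * X1 * (K * X2))).trace = (K * X1 * K * X2).trace := by
    have : K * (X2 * K * X1 * (K * X2)) = (K * X2) * (K * X1 * K * X2) := by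
      simp only [Matrix.mul_assoc]
    rw [this, trace_mul_comm]
    have : K * X1 * K * X2 * (K * X2) = K * X1 * K * (X2 * K * X2) := by
      simp only [Matrix.mul_assoc]
    rw [this, i2]
  simp only [Matrix.sub_mul, Matrix.mul_sub, Matrix.one_mul, Matrix.mul_one, Matrix.smul_mul,
    Matrix.mul_smul, trace_sub, trace_smul, t1, t2, t3, h1.2, smul_eq_mul]
  unfold adenom
  rw [← hab]
  ring

theorem good_R {m n : ℕ} {K : Matrix (Fin n) (Fin m) ℝ} {p1 q1 p2 q2 : ℝ}
    (hp : p1 ≠ p2) (hq : q1 ≠ q2)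
    {X1 X2 : Mat m n} (h1 : GoodX K X1) (h2 : GoodX K X2)
    (hd : adenom K p1 q1 p2 q2 X1 X2 ≠ 0) :
    GoodX K (Rmap K p1 q1 p2 q2 (X1, X2)).1 ∧ GoodX K (Rmap K p1 q1 p2 q2 (X1, X2)).2 := by
  have a1 := sub_ne_zero.2 hp
  have a2 := sub_ne_zero.2 hp.symm
  have a3 := sub_ne_zero.2 hq
  have a4 := sub_ne_zero.2 hq.symm
  constructor
  · refine good_aux _ _ ?_ h1 h2 hd
    field_simp
    ring
  · unfold Rmap
    dsimp only
    rw [adenom_symm] at hd ⊢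
    refine good_aux _ _ ?_ h2 h1 hd
    field_simp
    ring

theorem refactor_left {m n : ℕ} {K : Matrix (Fin n) (Fin m) ℝ} {p1 q1 p2 q2 : ℝ}
    (hp : p1 ≠ p2) (hq : q1 ≠ q2) (k1 : p1 ≠ q1) (k2 : p2 ≠ q2)
    {X1 X2 : Mat m n} (h1 : GoodX K X1) (h2 : GoodX K X2)
    (hd : adenom K p1 q1 p2 q2 X1 X2 ≠ 0) (l : ℝ) :
    LaxM p1 q1 l (X1 * K) * LaxM p2 q2 l (X2 * K) =
      LaxM p2 q2 l ((Rmap K p1 q1 p2 q2 (X1, X2)).2 * K) *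
      LaxM p1 q1 l ((Rmap K p1 q1 p2 q2 (X1, X2)).1 * K) := by
  have g1 : (K * X1 * K * X2).trace = (K * X2 * K * X1).trace := by
    rw [Matrix.mul_assoc (K * X1), trace_mul_comm]; simp only [Matrix.mul_assoc]
  refine lax_refactor (t := (K * X1 * K * X2).trace) hp hq k1 k2 ?_ ?_ ?_ ?_ rfl hd _ _ ?_ ?_ l
  · rw [← Matrix.mul_assoc, h1.idem]
  · rw [← Matrix.mul_assoc, h2.idem]
  · have := h1.1 (K * X2 * K)
    rw [← g1] at this
    rw [← Matrix.smul_mul, ← this]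
    simp only [Matrix.mul_assoc]
  · have := h2.1 (K * X1 * K)
    rw [← Matrix.smul_mul, ← this]
    simp only [Matrix.mul_assoc]
  · simp only [Rmap, adenom, Matrix.mul_assoc, Matrix.smul_mul, Matrix.sub_mul, Matrix.mul_sub,
      Matrix.mul_smul, Matrix.one_mul, Matrix.mul_one]
  · simp only [Rmap, adenom, Matrix.mul_assoc, Matrix.smul_mul, Matrix.sub_mul, Matrix.mul_sub,
      Matrix.mul_smul, Matrix.one_mul, Matrix.mul_one]

theorem refactor_right {m n : ℕ} {K : Matrix (Fin n) (Fin m) ℝ} {p1 q1 p2 q2 : ℝ}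
    (hp : p1 ≠ p2) (hq : q1 ≠ q2) (k1 : p1 ≠ q1) (k2 : p2 ≠ q2)
    {X1 X2 : Mat m n} (h1 : GoodX K X1) (h2 : GoodX K X2)
    (hd : adenom K p1 q1 p2 q2 X1 X2 ≠ 0) (l : ℝ) :
    LaxM p1 q1 l (K * X1) * LaxM p2 q2 l (K * X2) =
      LaxM p2 q2 l (K * (Rmap K p1 q1 p2 q2 (X1, X2)).2) *
      LaxM p1 q1 l (K * (Rmap K p1 q1 p2 q2 (X1, X2)).1) := by
  have g1 : (K * X1 * K * X2).trace = (K * X2 * K * X1).trace := by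
    rw [Matrix.mul_assoc (K * X1), trace_mul_comm]; simp only [Matrix.mul_assoc]
  refine lax_refactor (t := (K * X1 * K * X2).trace) hp hq k1 k2 ?_ ?_ ?_ ?_ rfl hd _ _ ?_ ?_ l
  · rw [Matrix.mul_assoc, ← Matrix.mul_assoc X1, h1.idem]
  · rw [Matrix.mul_assoc, ← Matrix.mul_assoc X2, h2.idem]
  · have := h1.1 (K * X2 * K)
    rw [← g1] at this
    rw [← Matrix.mul_smul, ← this]
    simp only [Matrix.mul_assoc]
  · have := h2.1 (K * X1 * K)
    rw [← Matrix.mul_smul, ← this]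
    simp only [Matrix.mul_assoc]
  · simp only [Rmap, adenom, Matrix.mul_assoc, Matrix.smul_mul, Matrix.sub_mul, Matrix.mul_sub,
      Matrix.mul_smul, Matrix.one_mul, Matrix.mul_one]
  · simp only [Rmap, adenom, Matrix.mul_assoc, Matrix.smul_mul, Matrix.sub_mul, Matrix.mul_sub,
      Matrix.mul_smul, Matrix.one_mul, Matrix.mul_one]

theorem lax_chain {A : Type*} [Ring A] {a b c a1 b1 c1 a2 b2 c2 b' c' a' c'' a'' b'' : A}
    (h1 : a * b = b1 * a1) (h2 : a1 * c = c1 * a2) (h3 : b1 * c1 = c2 * b2)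
    (k1 : b * c = c' * b') (k2 : a * c' = c'' * a') (k3 : a' * b' = b'' * a'') :
    c2 * b2 * a2 = c'' * b'' * a'' := by
  rw [← h3, mul_assoc, ← h2, ← mul_assoc, ← h1, mul_assoc, k1, ← mul_assoc, k2, mul_assoc, k3,
    mul_assoc]

theorem good_ext {m n : ℕ} {K : Matrix (Fin n) (Fin m) ℝ} {X Y : Mat m n} (h1 : GoodX K X)
    (h2 : GoodX K Y) (e1 : X * K = Y * K) (e2 : K * X = K * Y) : X = Y := by
  rw [← h1.idem, e1, Matrix.mul_assoc, e2, ← Matrix.mul_assoc, h2.idem]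

theorem GoodX.idl {m n : ℕ} {K : Matrix (Fin n) (Fin m) ℝ} {X : Mat m n} (h : GoodX K X) :
    (X * K) * (X * K) = X * K := by rw [← Matrix.mul_assoc, h.idem]

theorem GoodX.idr {m n : ℕ} {K : Matrix (Fin n) (Fin m) ℝ} {X : Mat m n} (h : GoodX K X) :
    (K * X) * (K * X) = K * X := by rw [Matrix.mul_assoc, ← Matrix.mul_assoc X, h.idem]

/-- `R` is a (parameter-dependent) Yang–Baxter map. -/
theorem R_is_YangBaxter
    (m n : ℕ) (hm : 0 < m) (hn : 0 < n)
    (K : Matrix (Fin n) (Fin m) ℝ) (hK : K.rank = min n m)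
    (p1 q1 p2 q2 p3 q3 : ℝ)
    (hp : List.Pairwise (· ≠ ·) [p1, p2, p3])
    (hq : List.Pairwise (· ≠ ·) [q1, q2, q3])
    (hpq11 : p1 ≠ q1) (hpq12 : p1 ≠ q2) (hpq13 : p1 ≠ q3)
    (hpq21 : p2 ≠ q1) (hpq22 : p2 ≠ q2) (hpq23 : p2 ≠ q3)
    (hpq31 : p3 ≠ q1) (hpq32 : p3 ≠ q2) (hpq33 : p3 ≠ q3)
    (X1 X2 X3 : Mat m n) (hX1 : InS K X1) (hX2 : InS K X2) (hX3 : InS K X3)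
    -- intermediate triples of the two compositions
    (U V U' V' : Mat m n × Mat m n × Mat m n)
    (hU : U = R12t K p1 q1 p2 q2 (X1, X2, X3))
    (hV : V = R13t K p1 q1 p3 q3 U)
    (hU' : U' = R23t K p2 q2 p3 q3 (X1, X2, X3))
    (hV' : V' = R13t K p1 q1 p3 q3 U')
    -- every α-factor occurring in the compositions is well defined and nonzero
    (ha1 : adenom K p1 q1 p2 q2 X1 X2 ≠ 0)
    (ha2 : adenom K p1 q1 p3 q3 U.1 U.2.2 ≠ 0)
    (ha3 : adenom K p2 q2 p3 q3 V.2.1 V.2.2 ≠ 0)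
    (ha4 : adenom K p2 q2 p3 q3 X2 X3 ≠ 0)
    (ha5 : adenom K p1 q1 p3 q3 U'.1 U'.2.2 ≠ 0)
    (ha6 : adenom K p1 q1 p2 q2 V'.1 V'.2.1 ≠ 0) :
    R23t K p2 q2 p3 q3 V = R12t K p1 q1 p2 q2 V' := by
  simp only [List.pairwise_cons, List.mem_cons, List.not_mem_nil, or_false, forall_eq_or_imp,
    forall_eq, ne_eq] at hp hq
  obtain ⟨⟨h12, h13⟩, h23, -⟩ := hp
  obtain ⟨⟨k12, k13⟩, k23, -⟩ := hq
  have g1 := goodX_of_inS hX1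
  have g2 := goodX_of_inS hX2
  have g3 := goodX_of_inS hX3
  subst hU hV hU' hV'
  obtain ⟨b1, b2⟩ := good_R h12 k12 g1 g2 ha1
  obtain ⟨c1, c3⟩ := good_R h13 k13 b1 g3 ha2
  obtain ⟨d2, d3⟩ := good_R h23 k23 b2 c3 ha3
  obtain ⟨b2', b3'⟩ := good_R h23 k23 g2 g3 ha4
  obtain ⟨c1', c3'⟩ := good_R h13 k13 g1 b3' ha5
  obtain ⟨d1', d2'⟩ := good_R h12 k12 c1' b2' ha6
  have L := lax_uniq3 h12 h13 h23 k12 k13 k23 hpq11 hpq12 hpq13 hpq21 hpq22 hpq23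
    hpq31 hpq32 hpq33 d2.idl d3.idl d1'.idl d2'.idl c3'.idl (fun l => lax_chain
      (refactor_left h12 k12 hpq11 hpq22 g1 g2 ha1 l)
      (refactor_left h13 k13 hpq11 hpq33 b1 g3 ha2 l)
      (refactor_left h23 k23 hpq22 hpq33 b2 c3 ha3 l)
      (refactor_left h23 k23 hpq22 hpq33 g2 g3 ha4 l)
      (refactor_left h13 k13 hpq11 hpq33 g1 b3' ha5 l)
      (refactor_left h12 k12 hpq11 hpq22 c1' b2' ha6 l))
  have R := lax_uniq3 h12 h13 h23 k12 k13 k23 hpq11 hpq12 hpq13 hpq21 hpq22 hpq23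
    hpq31 hpq32 hpq33 d2.idr d3.idr d1'.idr d2'.idr c3'.idr (fun l => lax_chain
      (refactor_right h12 k12 hpq11 hpq22 g1 g2 ha1 l)
      (refactor_right h13 k13 hpq11 hpq33 b1 g3 ha2 l)
      (refactor_right h23 k23 hpq22 hpq33 b2 c3 ha3 l)
      (refactor_right h23 k23 hpq22 hpq33 g2 g3 ha4 l)
      (refactor_right h13 k13 hpq11 hpq33 g1 b3' ha5 l)
      (refactor_right h12 k12 hpq11 hpq22 c1' b2' ha6 l))
  exact Prod.ext (good_ext c1 d1' L.1 R.1) (Prod.ext (good_ext d2 d2' L.2.1 R.2.1)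
    (good_ext d3 c3' L.2.2 R.2.2))
end

section
/- Let p1, q1, p2, q2 be pairwise distinct reals, X1, X2 ∈ S, and assume α_{12}(X1,X2) is well defined and nonzero. Let (X1',X2') = R(p1,q1;p2,q2)(X1,X2). Then X1' and X2' are again rank-one K-projections (i.e., X1', X2' ∈ S), and moreover (p1−q1)(X1' − X1) + (p2−q2)(X2' − X2) = 0. -/
open Matrix

theorem InS.exists_vec {m n : ℕ} {K : Matrix (Fin n) (Fin m) ℝ} {X : Mat m n} (h : InS K X) :
    ∃ (u : Fin m → ℝ) (v : Fin n → ℝ), X = vecMulVec u v ∧ v ⬝ᵥ (K *ᵥ u) = 1 := by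
  obtain ⟨h1, h2⟩ := h
  have hX0 : X ≠ 0 := by
    rintro rfl
    simp at h2
  rw [Matrix.rank, finrank_eq_one_iff'] at h2
  obtain ⟨⟨u, hu⟩, -, hv⟩ := h2
  have hcol : ∀ j, ∃ c : ℝ, c • u = X *ᵥ (Pi.single j 1) := fun j => by
    obtain ⟨c, hc⟩ := hv ⟨X *ᵥ (Pi.single j 1), ⟨Pi.single j 1, rfl⟩⟩
    exact ⟨c, congrArg Subtype.val hc⟩
  choose v hv using hcol
  have hX : X = vecMulVec u v := by
    ext i j
    have := congrFun (hv j) i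
    simp at this
    rw [vecMulVec_apply, ← this, mul_comm]
  refine ⟨u, v, hX, ?_⟩
  have h3 : (v ⬝ᵥ (K *ᵥ u)) • X = X := by
    conv_rhs => rw [← h1]
    rw [hX, Matrix.mul_assoc, mul_vecMulVec, vecMulVec_mul_vecMulVec, vecMulVec_smul]
  have h4 : (v ⬝ᵥ (K *ᵥ u) - 1) • X = 0 := by rw [sub_smul, h3, one_smul, sub_self]
  rcases smul_eq_zero.1 h4 with h | h
  · linarith
  · exact absurd h hX0

theorem InS_of_vec {m n : ℕ} (K : Matrix (Fin n) (Fin m) ℝ) (u : Fin m → ℝ) (v : Fin n → ℝ)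
    (s : ℝ) (hs : s ≠ 0) (h : v ⬝ᵥ (K *ᵥ u) = s) : InS K (s⁻¹ • vecMulVec u v) := by
  have h1 : s⁻¹ • vecMulVec u v * K * (s⁻¹ • vecMulVec u v) = s⁻¹ • vecMulVec u v := by
    rw [Matrix.mul_assoc, Matrix.mul_smul, mul_vecMulVec, Matrix.mul_smul, Matrix.smul_mul,
      vecMulVec_mul_vecMulVec, h, vecMulVec_smul, smul_smul s⁻¹ s, inv_mul_cancel₀ hs, one_smul]
  refine ⟨h1, le_antisymm ?_ ?_⟩
  · rw [← smul_vecMulVec]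
    exact rank_vecMulVec_le _ _
  · rw [Nat.one_le_iff_ne_zero]
    intro h0
    rw [Matrix.rank, Submodule.finrank_eq_zero, LinearMap.range_eq_bot] at h0
    have h2 : (s⁻¹ • vecMulVec u v) *ᵥ (K *ᵥ u) = 0 := by
      rw [← mulVecLin_apply, h0]; rfl
    rw [Matrix.smul_mulVec, vecMulVec_mulVec, h, op_smul_eq_smul, smul_smul,
      inv_mul_cancel₀ hs, one_smul] at h2
    rw [h2] at h
    simp at h
    exact hs h.symm

theorem dress_vec {m n : ℕ} (K : Matrix (Fin n) (Fin m) ℝ) (u1 u2 : Fin m → ℝ)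
    (v1 v2 : Fin n → ℝ) (c d : ℝ) :
    (1 - c • (vecMulVec u2 v2 * K)) * vecMulVec u1 v1 * (1 - d • (K * vecMulVec u2 v2)) =
      vecMulVec (u1 - (c * (v2 ⬝ᵥ (K *ᵥ u1))) • u2) (v1 - (d * (v1 ⬝ᵥ (K *ᵥ u2))) • v2) := by
  rw [mul_vecMulVec, vecMulVec_mul]
  congr 1
  · rw [sub_mulVec, one_mulVec, smul_mulVec, ← mulVec_mulVec, vecMulVec_mulVec, op_smul_eq_smul,
      smul_smul]
  · rw [vecMul_sub, vecMul_one, vecMul_smul, mul_vecMulVec, vecMul_vecMulVec, smul_smul]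

theorem pair_vec {m n : ℕ} (K : Matrix (Fin n) (Fin m) ℝ) (u1 u2 : Fin m → ℝ)
    (v1 v2 : Fin n → ℝ) (c d : ℝ) (h1 : v1 ⬝ᵥ (K *ᵥ u1) = 1) (h2 : v2 ⬝ᵥ (K *ᵥ u2) = 1) :
    (v1 - (d * (v1 ⬝ᵥ (K *ᵥ u2))) • v2) ⬝ᵥ (K *ᵥ (u1 - (c * (v2 ⬝ᵥ (K *ᵥ u1))) • u2)) =
      1 - (c + d - c * d) * ((v1 ⬝ᵥ (K *ᵥ u2)) * (v2 ⬝ᵥ (K *ᵥ u1))) := by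
  simp only [mulVec_sub, mulVec_smul, sub_dotProduct, dotProduct_sub, smul_dotProduct,
    dotProduct_smul, smul_eq_mul, h1, h2]
  ring

/-- `R` maps `S × S` to `S × S`, and `(p1−q1)(X1'−X1) + (p2−q2)(X2'−X2) = 0`. -/
theorem Rmap_preserves_S_and_conservation
    (m n : ℕ) (hm : 0 < m) (hn : 0 < n)
    (K : Matrix (Fin n) (Fin m) ℝ) (hK : K.rank = min n m)
    (p1 q1 p2 q2 : ℝ)
    (hdist : List.Pairwise (· ≠ ·) [p1, q1, p2, q2])
    (X1 X2 : Mat m n) (hX1 : InS K X1) (hX2 : InS K X2)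
    (ha : adenom K p1 q1 p2 q2 X1 X2 ≠ 0) :
    InS K (Rmap K p1 q1 p2 q2 (X1, X2)).1 ∧
    InS K (Rmap K p1 q1 p2 q2 (X1, X2)).2 ∧
    (p1 - q1) • ((Rmap K p1 q1 p2 q2 (X1, X2)).1 - X1)
      + (p2 - q2) • ((Rmap K p1 q1 p2 q2 (X1, X2)).2 - X2) = 0 := by
  obtain ⟨u1, v1, rfl, h1⟩ := hX1.exists_vec
  obtain ⟨u2, v2, rfl, h2⟩ := hX2.exists_vec
  simp only [List.pairwise_cons, List.mem_cons, List.not_mem_nil, or_false, forall_eq_or_imp,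
    forall_eq] at hdist
  obtain ⟨⟨-, h13, -⟩, ⟨-, h24⟩, -⟩ := hdist
  have e1 : p2 - p1 ≠ 0 := sub_ne_zero.2 (Ne.symm h13)
  have e2 : q2 - q1 ≠ 0 := sub_ne_zero.2 (Ne.symm h24)
  have e3 : p1 - p2 ≠ 0 := sub_ne_zero.2 h13
  have e4 : q1 - q2 ≠ 0 := sub_ne_zero.2 h24
  have hs : adenom K p1 q1 p2 q2 (vecMulVec u1 v1) (vecMulVec u2 v2) =
      1 - (p1 - q1) * (p2 - q2) / ((p2 - p1) * (q2 - q1)) *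
        ((v1 ⬝ᵥ (K *ᵥ u2)) * (v2 ⬝ᵥ (K *ᵥ u1))) := by
    rw [adenom, Matrix.mul_assoc (K * _), mul_vecMulVec, mul_vecMulVec, vecMulVec_mul_vecMulVec,
      trace_vecMulVec, dotProduct_smul, smul_eq_mul, dotProduct_comm (K *ᵥ u1)]
  simp only [Rmap, dress_vec]
  generalize adenom K p1 q1 p2 q2 (vecMulVec u1 v1) (vecMulVec u2 v2) = s at *
  refine ⟨InS_of_vec _ _ _ _ ha ?_, InS_of_vec _ _ _ _ ha ?_, ?_⟩
  · rw [pair_vec K u1 u2 v1 v2 _ _ h1 h2, hs]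
    congr 2
    grind
  · rw [pair_vec K u2 u1 v2 v1 _ _ h2 h1, hs, mul_comm (v2 ⬝ᵥ (K *ᵥ u1))]
    congr 2
    grind
  · generalize v1 ⬝ᵥ (K *ᵥ u2) = a at *
    generalize v2 ⬝ᵥ (K *ᵥ u1) = b at *
    ext i j
    simp only [Matrix.add_apply, Matrix.sub_apply, Matrix.smul_apply, vecMulVec_apply,
      Pi.sub_apply, Pi.smul_apply, smul_eq_mul, Matrix.zero_apply]
    generalize u1 i = x1
    generalize u2 i = x2
    generalize v1 j = y1
    generalize v2 j = y2
    have f1 : p1 - p2 = -(p2 - p1) := by ring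
    have f2 : q1 - q2 = -(q2 - q1) := by ring
    rw [f1, f2]
    field_simp
    field_simp at hs
    have hs' : s * ((p2 - p1) * (q2 - q1)) = (p2 - p1) * (q2 - q1)
      - (p1 - q1) * (p2 - q2) * (a * b) := by linear_combination hs
    linear_combination (- (p1 - q1) * (x1 * y1) - (p2 - q2) * (x2 * y2)) * hs'
end

section
/- Let p1, q1, p2, q2 be pairwise distinct reals and X1, X2 ∈ S. Then tr[B2(p1,X2) X1 Ã2(q1,X2) K] = tr[A1(q2,X1) X2 B̃1(p2,X1) K] = 1 − ((p1−q1)(p2−q2))/((p2−p1)(q2−q1))·tr(K X1 K X2), i.e., both traces equal α_{12}(X1,X2)^{-1}. -/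
open Matrix

theorem trace_of_idem_rank_one {m n : ℕ} (K : Matrix (Fin n) (Fin m) ℝ) (X : Mat m n)
    (h : InS K X) : (X * K).trace = 1 := by
  obtain ⟨h1, h2⟩ := h
  have hid : IsIdempotentElem (X * K) := by
    unfold IsIdempotentElem
    rw [← Matrix.mul_assoc, h1]
  have hr : (X * K).rank = 1 := by
    apply le_antisymm
    · rw [← h2]; exact Matrix.rank_mul_le_left X K
    · calc 1 = (X * K * X).rank := by rw [h1, h2]
        _ ≤ _ := Matrix.rank_mul_le_left _ _
  have hid' : IsIdempotentElem (Matrix.toLin' (X * K)) := by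
    unfold IsIdempotentElem
    rw [Module.End.mul_eq_comp, ← Matrix.toLin'_mul, hid.eq]
  have ht := (LinearMap.IsIdempotentElem.isProj_range _ hid').trace
  rw [Matrix.trace_toLin'_eq] at ht
  rw [ht]
  have : Module.finrank ℝ (LinearMap.range (Matrix.toLin' (X * K))) = 1 := hr
  rw [this]; simp

theorem trace_expand {m : ℕ} (P Q : Matrix (Fin m) (Fin m) ℝ) (hP : P.trace = 1)
    (hQ : Q * Q = Q) (a b : ℝ) :
    ((1 + b • Q) * P * (1 + a • Q)).trace = 1 + (a + b + a * b) * (P * Q).trace := by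
  have h1 : (Q * P).trace = (P * Q).trace := Matrix.trace_mul_comm _ _
  have h2 : (Q * P * Q).trace = (P * Q).trace := by
    rw [Matrix.trace_mul_comm, ← Matrix.mul_assoc, hQ, h1]
  simp only [Matrix.add_mul, Matrix.mul_add, Matrix.one_mul, Matrix.mul_one, Matrix.smul_mul,
    Matrix.mul_smul, Matrix.trace_add, Matrix.trace_smul, smul_eq_mul, hP, h1, h2]
  ring

/-- `tr[B₂(p1,X2) X1 Ã₂(q1,X2) K] = tr[A₁(q2,X1) X2 B̃₁(p2,X1) K] = α₁₂⁻¹`. -/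
theorem trace_identities_alpha
    (m n : ℕ) (hm : 0 < m) (hn : 0 < n)
    (K : Matrix (Fin n) (Fin m) ℝ) (hK : K.rank = min n m)
    (p1 q1 p2 q2 : ℝ)
    (hdist : List.Pairwise (· ≠ ·) [p1, q1, p2, q2])
    (X1 X2 : Mat m n) (hX1 : InS K X1) (hX2 : InS K X2) :
    (Bmat K p2 q2 p1 X2 * X1 * Atil K p2 q2 q1 X2 * K).trace
      = 1 - (p1 - q1) * (p2 - q2) / ((p2 - p1) * (q2 - q1)) * (K * X1 * K * X2).trace ∧
    (Amat K p1 q1 q2 X1 * X2 * Btil K p1 q1 p2 X1 * K).trace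
      = 1 - (p1 - q1) * (p2 - q2) / ((p2 - p1) * (q2 - q1)) * (K * X1 * K * X2).trace := by
  have t1 := trace_of_idem_rank_one K X1 hX1
  have t2 := trace_of_idem_rank_one K X2 hX2
  have i1 : X1 * K * (X1 * K) = X1 * K := by rw [← Matrix.mul_assoc, hX1.1]
  have i2 : X2 * K * (X2 * K) = X2 * K := by rw [← Matrix.mul_assoc, hX2.1]
  have hT : (K * X1 * K * X2).trace = (X1 * K * (X2 * K)).trace := by
    rw [Matrix.mul_assoc K, Matrix.mul_assoc K, Matrix.trace_mul_comm]
    simp only [Matrix.mul_assoc]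
  have hT' : (X2 * K * (X1 * K)).trace = (X1 * K * (X2 * K)).trace := Matrix.trace_mul_comm _ _
  simp only [List.pairwise_cons, List.mem_cons, forall_eq_or_imp] at hdist
  obtain ⟨⟨-, hpp, -⟩, ⟨-, hqq, -⟩, -⟩ := hdist
  have e1 : p1 - p2 ≠ 0 := sub_ne_zero.2 hpp
  have e2 : p2 - p1 ≠ 0 := sub_ne_zero.2 hpp.symm
  have e3 : q1 - q2 ≠ 0 := sub_ne_zero.2 (by tauto)
  have e4 : q2 - q1 ≠ 0 := sub_ne_zero.2 (by tauto)
  rw [hT]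
  constructor
  · have : Bmat K p2 q2 p1 X2 * X1 * Atil K p2 q2 q1 X2 * K
        = (1 + ((p2 - q2) / (p1 - p2)) • (X2 * K)) * (X1 * K) *
          (1 + (-((p2 - q2) / (q1 - q2))) • (X2 * K)) := by
      simp only [Bmat, Atil, Matrix.add_mul, Matrix.mul_add, Matrix.sub_mul, Matrix.mul_sub,
        Matrix.one_mul, Matrix.mul_one, Matrix.smul_mul, Matrix.mul_smul, Matrix.mul_assoc,
        neg_smul, sub_eq_add_neg, Matrix.neg_mul, Matrix.mul_neg]
    rw [this, trace_expand _ _ t1 i2, sub_eq_add_neg (1 : ℝ), ← neg_mul]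
    congr 2
    rw [show q2 - q1 = -(q1 - q2) by ring, show p2 - p1 = -(p1 - p2) by ring]
    field_simp
    ring
  · have : Amat K p1 q1 q2 X1 * X2 * Btil K p1 q1 p2 X1 * K
        = (1 + (-((p1 - q1) / (q2 - q1))) • (X1 * K)) * (X2 * K) *
          (1 + ((p1 - q1) / (p2 - p1)) • (X1 * K)) := by
      simp only [Amat, Btil, Matrix.add_mul, Matrix.mul_add, Matrix.sub_mul, Matrix.mul_sub,
        Matrix.one_mul, Matrix.mul_one, Matrix.smul_mul, Matrix.mul_smul, Matrix.mul_assoc,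
        neg_smul, sub_eq_add_neg, Matrix.neg_mul, Matrix.mul_neg]
    rw [this, trace_expand _ _ t2 i1, hT', sub_eq_add_neg (1 : ℝ), ← neg_mul]
    congr 2
    field_simp
    ring
end

section
/- Let p1, q1, p2, q2 be pairwise distinct reals, X1, X2 ∈ S, with α_{12}(X1,X2) well defined and nonzero, and let (X1',X2') = R(p1,q1;p2,q2)(X1,X2). Then R is reversible: applying R with the roles of the two solitons exchanged returns the original pair, i.e., R(p2,q2;p1,q1)(X2',X1') = (X2,X1). -/
open Matrix

/-- The bilinear pairing `vᵀ K u`. -/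
noncomputable def bilK {m n : ℕ} (K : Matrix (Fin n) (Fin m) ℝ) (v : Fin n → ℝ) (u : Fin m → ℝ) : ℝ :=
  v ⬝ᵥ (K *ᵥ u)

theorem rank_one_vec {m n : ℕ} (X : Mat m n) (h : X.rank = 1) :
    ∃ u v, X = vecMulVec u v := by
  rw [Matrix.rank, finrank_eq_one_iff'] at h
  obtain ⟨w, -, hw⟩ := h
  have h2 : ∀ j : Fin n, ∃ c : ℝ, c • (w : Fin m → ℝ) = X.col j := by
    intro j
    obtain ⟨c, hc⟩ := hw ⟨X.mulVecLin (Pi.single j 1), LinearMap.mem_range_self _ _⟩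
    refine ⟨c, ?_⟩
    have := congrArg Subtype.val hc
    simpa using this
  choose c hc using h2
  refine ⟨w, c, ?_⟩
  ext i j
  have := congrFun (hc j) i
  simp [vecMulVec_apply] at this ⊢
  rw [← this, mul_comm]

theorem sandwich {m n : ℕ} (K : Matrix (Fin n) (Fin m) ℝ) (s t : ℝ) (u u1 : Fin m → ℝ)
    (v v1 : Fin n → ℝ) :
    (1 - s • (vecMulVec u v * K)) * vecMulVec u1 v1 * (1 - t • (K * vecMulVec u v))
      = vecMulVec (u1 - (s * bilK K v u1) • u) (v1 - (t * bilK K v1 u) • v) := by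
  have e1 : (1 - s • (vecMulVec u v * K)) * vecMulVec u1 v1
      = vecMulVec (u1 - (s * bilK K v u1) • u) v1 := by
    rw [mul_vecMulVec]
    congr 1
    rw [sub_mulVec, one_mulVec, smul_mulVec, ← mulVec_mulVec, vecMulVec_mulVec]
    simp [bilK, smul_smul]
  rw [e1, vecMulVec_mul]
  congr 1
  rw [vecMul_sub, vecMul_one, vecMul_smul, ← vecMul_vecMul]
  ext j
  simp [bilK, vecMul_vecMulVec, dotProduct_mulVec, mul_assoc]

theorem trace_vec {m n : ℕ} (K : Matrix (Fin n) (Fin m) ℝ) (u1 u2 : Fin m → ℝ)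
    (v1 v2 : Fin n → ℝ) :
    (K * vecMulVec u1 v1 * K * vecMulVec u2 v2).trace = bilK K v1 u2 * bilK K v2 u1 := by
  rw [Matrix.mul_assoc, mul_vecMulVec, mul_vecMulVec, vecMulVec_mul_vecMulVec, trace_vecMulVec]
  simp [bilK, dotProduct_comm, mul_comm]

theorem Rmap_vec {m n : ℕ} (K : Matrix (Fin n) (Fin m) ℝ) (p1 q1 p2 q2 A : ℝ)
    (u1 u2 : Fin m → ℝ) (v1 v2 : Fin n → ℝ)
    (hA : 1 - (p1 - q1) * (p2 - q2) / ((p2 - p1) * (q2 - q1)) * (bilK K v1 u2 * bilK K v2 u1) = A) :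
    Rmap K p1 q1 p2 q2 (vecMulVec u1 v1, vecMulVec u2 v2) =
      (vecMulVec (A⁻¹ • (u1 - ((p2 - q2) / (p2 - p1) * bilK K v2 u1) • u2))
          (v1 - ((p2 - q2) / (q1 - q2) * bilK K v1 u2) • v2),
       vecMulVec (A⁻¹ • (u2 - ((p1 - q1) / (q2 - q1) * bilK K v1 u2) • u1))
          (v2 - ((p1 - q1) / (p1 - p2) * bilK K v2 u1) • v1)) := by
  simp only [Rmap, adenom, trace_vec, hA, sandwich, smul_vecMulVec]

theorem bil_comb {m n : ℕ} (K : Matrix (Fin n) (Fin m) ℝ) (r s t : ℝ) (u u' : Fin m → ℝ)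
    (v v' : Fin n → ℝ) :
    bilK K (v - s • v') (r • (u - t • u')) =
      r * (bilK K v u - t * bilK K v u' - s * bilK K v' u + s * t * bilK K v' u') := by
  simp only [bilK, mulVec_smul, mulVec_sub, sub_dotProduct, dotProduct_sub, dotProduct_smul,
    smul_dotProduct, smul_eq_mul]
  ring

theorem bil_self {m n : ℕ} (K : Matrix (Fin n) (Fin m) ℝ) (u : Fin m → ℝ) (v : Fin n → ℝ)
    (h : InS K (vecMulVec u v)) : bilK K v u = 1 := by
  obtain ⟨h1, h2⟩ := h
  have h0 : vecMulVec u v ≠ 0 := by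
    intro h0
    rw [h0] at h2
    simp at h2
  rw [Matrix.mul_assoc, mul_vecMulVec, vecMulVec_mul_vecMulVec] at h1
  have h3 : (bilK K v u - 1) • vecMulVec u v = 0 := by
    rw [sub_smul, one_smul, sub_eq_zero]
    rw [← vecMulVec_smul]
    exact h1
  rcases smul_eq_zero.1 h3 with h | h
  · linarith
  · exact absurd h h0

/-- `R` is reversible: `R(p2,q2;p1,q1)(X2',X1') = (X2,X1)`. -/
theorem Rmap_reversible
    (m n : ℕ) (hm : 0 < m) (hn : 0 < n)
    (K : Matrix (Fin n) (Fin m) ℝ) (hK : K.rank = min n m)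
    (p1 q1 p2 q2 : ℝ)
    (hdist : List.Pairwise (· ≠ ·) [p1, q1, p2, q2])
    (X1 X2 : Mat m n) (hX1 : InS K X1) (hX2 : InS K X2)
    (ha : adenom K p1 q1 p2 q2 X1 X2 ≠ 0) :
    Rmap K p2 q2 p1 q1
        ((Rmap K p1 q1 p2 q2 (X1, X2)).2, (Rmap K p1 q1 p2 q2 (X1, X2)).1)
      = (X2, X1) := by
  obtain ⟨u1, v1, rfl⟩ := rank_one_vec X1 hX1.2
  obtain ⟨u2, v2, rfl⟩ := rank_one_vec X2 hX2.2
  have s1 := bil_self K u1 v1 hX1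
  have s2 := bil_self K u2 v2 hX2
  have hp : p2 - p1 ≠ 0 := by
    simp at hdist
    exact sub_ne_zero.2 (Ne.symm hdist.1.2.1)
  have hq : q2 - q1 ≠ 0 := by
    simp at hdist
    exact sub_ne_zero.2 (Ne.symm hdist.2.1.2)
  rw [adenom, trace_vec] at ha
  obtain ⟨A, hA⟩ : ∃ A, 1 - (p1 - q1) * (p2 - q2) / ((p2 - p1) * (q2 - q1)) *
    (bilK K v1 u2 * bilK K v2 u1) = A := ⟨_, rfl⟩
  rw [hA] at ha
  rw [Rmap_vec K p1 q1 p2 q2 A u1 u2 v1 v2 hA]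
  have np : p1 - p2 = -(p2 - p1) := by ring
  have nq : q1 - q2 = -(q2 - q1) := by ring
  simp only [np, nq]
  obtain ⟨x, hx⟩ : ∃ x, x = p2 - p1 := ⟨_, rfl⟩
  obtain ⟨y, hy⟩ : ∃ y, y = q2 - q1 := ⟨_, rfl⟩
  have hb' := bil_comb K A⁻¹ ((p1 - q1) / (-(p2 - p1)) * bilK K v2 u1)
    ((p2 - q2) / (p2 - p1) * bilK K v2 u1) u1 u2 v2 v1
  have ha' := bil_comb K A⁻¹ ((p2 - q2) / (-(q2 - q1)) * bilK K v1 u2)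
    ((p1 - q1) / (q2 - q1) * bilK K v1 u2) u2 u1 v1 v2
  rw [s1, s2] at hb' ha'
  rw [← hx] at hp hA hb'
  rw [← hy] at hq hA ha'
  rw [← hx, ← hy]
  clear np nq
  obtain rfl : p2 = p1 + x := by linarith
  obtain rfl : q2 = q1 + y := by linarith
  generalize bilK K v1 u2 = a at *
  generalize bilK K v2 u1 = b at *
  have hA2 : (p1 - q1) * (p1 + x - (q1 + y)) * a * b = (1 - A) * (x * y) := by
    rw [← hA]; field_simp; ring
  have hb2 : A⁻¹ * (b - (p1 + x - (q1 + y)) / x * b * 1 - (p1 - q1) / -x * b * 1 +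
      (p1 - q1) / -x * b * ((p1 + x - (q1 + y)) / x * b) * a) = b * y / x := by
    field_simp
    linear_combination (-b) * hA2
  have ha2 : A⁻¹ * (a - (p1 - q1) / y * a * 1 - (p1 + x - (q1 + y)) / -y * a * 1 +
      (p1 + x - (q1 + y)) / -y * a * ((p1 - q1) / y * a) * b) = a * x / y := by
    field_simp
    linear_combination (-a) * hA2
  rw [hb2] at hb'
  rw [ha2] at ha'
  rw [Rmap_vec K (p1 + x) (q1 + y) p1 q1 A _ _ _ _ (by
    rw [hb', ha', ← hA]
    have e1 : p1 - (p1 + x) = -x := by ring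
    have e2 : q1 - (q1 + y) = -y := by ring
    rw [e1, e2]
    field_simp)]
  rw [hb', ha']
  have e1 : p1 - (p1 + x) = -x := by ring
  have e2 : q1 - (q1 + y) = -y := by ring
  have e3 : p1 + x - p1 = x := by ring
  have e4 : q1 + y - q1 = y := by ring
  rw [e1, e2, e3, e4]
  refine Prod.ext ?_ ?_
  · ext i j
    simp only [vecMulVec_apply, Pi.smul_apply, Pi.sub_apply, smul_eq_mul]
    have k1 : A⁻¹ * (u2 i - (p1 - q1) / y * a * u1 i) - (p1 - q1) / -x * (a * x / y) *
       (A⁻¹ * (u1 i - (p1 + x - (q1 + y)) / x * b * u2 i)) = u2 i := by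
      field_simp
      linear_combination (-u2 i) * hA2
    have k2 : v2 j - (p1 - q1) / -x * b * v1 j - (p1 - q1) / y * (b * y / x) *
       (v1 j - (p1 + x - (q1 + y)) / -y * a * v2 j) = A * v2 j := by
      field_simp
      linear_combination (-v2 j) * hA2
    rw [k1, k2]
    field_simp
  · ext i j
    simp only [vecMulVec_apply, Pi.smul_apply, Pi.sub_apply, smul_eq_mul]
    have k1 : A⁻¹ * (u1 i - (p1 + x - (q1 + y)) / x * b * u2 i) - (p1 + x - (q1 + y)) / -y * (b * y / x) *
       (A⁻¹ * (u2 i - (p1 - q1) / y * a * u1 i)) = u1 i := by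
      field_simp
      linear_combination (-u1 i) * hA2
    have k2 : v1 j - (p1 + x - (q1 + y)) / -y * a * v2 j - (p1 + x - (q1 + y)) / x * (a * x / y) *
       (v2 j - (p1 - q1) / -x * b * v1 j) = A * v1 j := by
      field_simp
      linear_combination (-v1 j) * hA2
    rw [k1, k2]
    field_simp
end

section
/- Let p1, q1, p2, q2 be pairwise distinct reals and X1, X2 ∈ S. Suppose X1', X2' are rank-one K-projections such that for every real λ outside {p2, q1} one has A1(λ,X1) B2(λ,X2) = B2(λ,X2') A1(λ,X1') and Ã1(λ,X1) B̃2(λ,X2) = B̃2(λ,X2') Ã1(λ,X1'). Assume the trace denominators below are nonzero. Then X1' = A2(p1,X2) X1 B̃2(q1,X2) / tr[A2(p1,X2) X1 B̃2(q1,X2) K] and X2' = A1(p2,X1) X2 B̃1(q2,X1) / tr[A1(p2,X1) X2 B̃1(q2,X1) K]; that is, (X1',X2') = T(p1,q1;p2,q2)(X1,X2). -/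
open Matrix

theorem aux_rank_one {m n : ℕ} (X : Mat m n) (h : X.rank = 1) :
    X ≠ 0 ∧ ∃ (u : Fin m → ℝ) (v : Fin n → ℝ), X = vecMulVec u v := by
  constructor
  · rintro rfl
    simp at h
  · rw [Matrix.rank, finrank_eq_one_iff'] at h
    obtain ⟨u, -, hu⟩ := h
    have : ∀ j, ∃ c : ℝ, c • (u : Fin m → ℝ) = X *ᵥ Pi.single j 1 := by
      intro j
      obtain ⟨c, hc⟩ := hu ⟨X *ᵥ Pi.single j 1, ⟨Pi.single j 1, rfl⟩⟩
      exact ⟨c, congrArg Subtype.val hc⟩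
    choose v hv using this
    refine ⟨u, v, ?_⟩
    ext i j
    have := congrFun (hv j) i
    simp at this
    rw [vecMulVec_apply, ← this, mul_comm]

theorem aux_final {m n : ℕ} (K : Matrix (Fin n) (Fin m) ℝ) (X X' : Mat m n)
    (hX : InS K X) (hX' : InS K X') (L Z : Matrix (Fin m) (Fin m) ℝ)
    (R W : Matrix (Fin n) (Fin n) ℝ) (h1 : X' = L * X * W) (h2 : X' = Z * X * R) :
    X' = (L * X * R * K).trace⁻¹ • (L * X * R) := by
  obtain ⟨-, u, v, hu⟩ := aux_rank_one X hX.2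
  obtain ⟨hne, a, b, hab⟩ := aux_rank_one X' hX'.2
  have htr : (X' * K).trace = 1 := by
    have h := hX'.1
    have e : X' * K * X' = (X' * K).trace • X' := by
      rw [hab, vecMulVec_mul, vecMulVec_mul_vecMulVec, trace_vecMulVec, dotProduct_comm]
      rw [vecMulVec_smul]
    rw [e] at h
    have h3 : ((X' * K).trace - 1) • X' = 0 := by rw [sub_smul, h, one_smul, sub_self]
    rcases smul_eq_zero.1 h3 with h4 | h4
    · linarith
    · exact absurd h4 hne
  have hs : ∃ s : ℝ, X' = s • (L * X * R) := by
    rw [hu, mul_vecMulVec, vecMulVec_mul] at h1 h2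
    rw [hu, mul_vecMulVec, vecMulVec_mul]
    generalize L *ᵥ u = a' at *
    generalize v ᵥ* W = b' at *
    generalize Z *ᵥ u = c' at *
    generalize v ᵥ* R = d' at *
    have ha : a' ≠ 0 := by
      rintro rfl
      apply hne
      rw [h1]; ext i j; simp [vecMulVec_apply]
    obtain ⟨i, hi⟩ := Function.ne_iff.1 ha
    have hi' : a' i ≠ 0 := hi
    refine ⟨c' i / a' i, ?_⟩
    have hb : ∀ j, a' i * b' j = c' i * d' j := fun j => by
      have := congrFun (congrFun (h1.symm.trans h2) i) j
      simpa [vecMulVec_apply] using this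
    rw [h1]
    ext k j
    simp only [vecMulVec_apply, Matrix.smul_apply, smul_eq_mul]
    have := hb j
    field_simp
    linear_combination a' k * this
  obtain ⟨s, hs⟩ := hs
  have : s * (L * X * R * K).trace = 1 := by
    rw [← htr]
    conv_rhs => rw [hs]
    rw [Matrix.smul_mul, trace_smul, smul_eq_mul]
  rw [← eq_inv_of_mul_eq_one_left this]
  exact hs

theorem aux_inv {M : Type*} [Ring M] [Algebra ℝ M] (P : M) (hP : P * P = P) (p q l : ℝ)
    (hp : l ≠ p) (hq : l ≠ q) :
    (1 - ((p - q) / (l - q)) • P) * (1 + ((p - q) / (l - p)) • P) = 1 := by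
  have hp' := sub_ne_zero.2 hp
  have hq' := sub_ne_zero.2 hq
  have e : (p - q) / (l - p) - (p - q) / (l - q)
      - (p - q) / (l - q) * ((p - q) / (l - p)) = 0 := by
    field_simp; ring
  generalize (p - q) / (l - p) = x at *
  generalize (p - q) / (l - q) = y at *
  have : (1 - y • P) * (1 + x • P) = 1 + (x - y - y * x) • P := by
    rw [sub_mul, mul_add, mul_add, smul_mul_smul_comm, hP, one_mul, one_mul, mul_one]
    module
  rw [this, e, zero_smul, add_zero]

theorem aux_res {M : Type*} [Ring M] [Algebra ℝ M] (P1 P2 Q1 Q2 : M) (p1 q1 p2 q2 : ℝ)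
    (h1 : p1 ≠ q1) (h2 : p1 ≠ p2) (h3 : p1 ≠ q2) (h4 : q1 ≠ p2) (h5 : q1 ≠ q2) (h6 : p2 ≠ q2)
    (h : ∀ l : ℝ, l ≠ p2 → l ≠ q1 →
      (1 - ((p1 - q1) / (l - q1)) • P1) * (1 + ((p2 - q2) / (l - p2)) • P2) =
      (1 + ((p2 - q2) / (l - p2)) • Q2) * (1 - ((p1 - q1) / (l - q1)) • Q1)) :
    P1 * (1 + ((p2 - q2) / (q1 - p2)) • P2) = (1 + ((p2 - q2) / (q1 - p2)) • Q2) * Q1 ∧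
    (1 - ((p1 - q1) / (p2 - q1)) • P1) * P2 = Q2 * (1 - ((p1 - q1) / (p2 - q1)) • Q1) := by
  have key : ∀ l : ℝ, l ≠ p2 → l ≠ q1 →
      (-((p1 - q1) * (l - p2))) • (P1 - Q1) + ((p2 - q2) * (l - q1)) • (P2 - Q2)
        - ((p1 - q1) * (p2 - q2)) • (P1 * P2 - Q2 * Q1) = 0 := by
    intro l hl1 hl2
    have e := h l hl1 hl2
    have hl1' := sub_ne_zero.2 hl1
    have hl2' := sub_ne_zero.2 hl2
    have ex : (p1 - q1) = (p1 - q1) / (l - q1) * (l - q1) := by field_simp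
    have ey : (p2 - q2) = (p2 - q2) / (l - p2) * (l - p2) := by field_simp
    rw [ex, ey]
    generalize (p1 - q1) / (l - q1) = x at *
    generalize (p2 - q2) / (l - p2) = y at *
    simp only [sub_mul, mul_add, mul_sub, add_mul, smul_mul_smul_comm, one_mul, mul_one] at e
    linear_combination (norm := module) ((l - q1) * (l - p2)) • e
  have k1 := key p1 h2 h1
  have k2 := key q2 h6.symm h5.symm
  have d1 := sub_ne_zero.2 h1
  have d2 := sub_ne_zero.2 h3
  have d3 := sub_ne_zero.2 h4
  have d6 := sub_ne_zero.2 h6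
  have d4 : p2 - q1 ≠ 0 := sub_ne_zero.2 h4.symm
  have all : ∀ l : ℝ,
      (-((p1 - q1) * (l - p2))) • (P1 - Q1) + ((p2 - q2) * (l - q1)) • (P2 - Q2)
        - ((p1 - q1) * (p2 - q2)) • (P1 * P2 - Q2 * Q1) = 0 := by
    intro l
    have : (p1 - q2) • ((-((p1 - q1) * (l - p2))) • (P1 - Q1) + ((p2 - q2) * (l - q1)) • (P2 - Q2)
        - ((p1 - q1) * (p2 - q2)) • (P1 * P2 - Q2 * Q1)) = 0 := by
      linear_combination (norm := module) (l - q2) • k1 + (p1 - l) • k2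
    exact (smul_eq_zero.1 this).resolve_left d2
  constructor
  · have e := all q1
    have e' : ((p1 - q1) * (q1 - p2)) • (P1 * (1 + ((p2 - q2) / (q1 - p2)) • P2)
        - (1 + ((p2 - q2) / (q1 - p2)) • Q2) * Q1) = 0 := by
      have ey : (p2 - q2) = (p2 - q2) / (q1 - p2) * (q1 - p2) := by field_simp
      rw [ey] at e
      generalize (p2 - q2) / (q1 - p2) = y at *
      simp only [mul_add, add_mul, mul_one, one_mul, mul_smul_comm, smul_mul_assoc]
      linear_combination (norm := module) (-1 : ℝ) • e
    exact sub_eq_zero.1 ((smul_eq_zero.1 e').resolve_left (mul_ne_zero d1 d3))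
  · have e := all p2
    have e' : ((p2 - q2) * (p2 - q1)) • ((1 - ((p1 - q1) / (p2 - q1)) • P1) * P2
        - Q2 * (1 - ((p1 - q1) / (p2 - q1)) • Q1)) = 0 := by
      have ey : (p1 - q1) = (p1 - q1) / (p2 - q1) * (p2 - q1) := by field_simp
      rw [ey] at e
      generalize (p1 - q1) / (p2 - q1) = y at *
      simp only [mul_sub, sub_mul, mul_one, one_mul, mul_smul_comm, smul_mul_assoc] at e ⊢
      linear_combination (norm := module) e
    exact sub_eq_zero.1 ((smul_eq_zero.1 e').resolve_left (mul_ne_zero d6 d4))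

/-- the refactorization equations with `A₁` and `B₂` determine the map `T`. -/
theorem lax_representation_determines_T
    (m n : ℕ) (hm : 0 < m) (hn : 0 < n)
    (K : Matrix (Fin n) (Fin m) ℝ) (hK : K.rank = min n m)
    (p1 q1 p2 q2 : ℝ)
    (hdist : List.Pairwise (· ≠ ·) [p1, q1, p2, q2])
    (X1 X2 X1' X2' : Mat m n)
    (hX1 : InS K X1) (hX2 : InS K X2) (hX1' : InS K X1') (hX2' : InS K X2')
    (hd1 : Tden1 K p1 q1 p2 q2 X1 X2 ≠ 0)
    (hd2 : Tden2 K p1 q1 p2 q2 X1 X2 ≠ 0)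
    (hLax : ∀ lam : ℝ, lam ≠ p2 → lam ≠ q1 →
      Amat K p1 q1 lam X1 * Bmat K p2 q2 lam X2
        = Bmat K p2 q2 lam X2' * Amat K p1 q1 lam X1' ∧
      Atil K p1 q1 lam X1 * Btil K p2 q2 lam X2
        = Btil K p2 q2 lam X2' * Atil K p1 q1 lam X1') :
    (X1', X2') = Tmap K p1 q1 p2 q2 (X1, X2) := by
  have hd : p1 ≠ q1 ∧ p1 ≠ p2 ∧ p1 ≠ q2 ∧ q1 ≠ p2 ∧ q1 ≠ q2 ∧ p2 ≠ q2 := by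
    simp at hdist
    tauto
  obtain ⟨h1, h2, h3, h4, h5, h6⟩ := hd
  have idem : ∀ X : Mat m n, InS K X → (X * K) * (X * K) = X * K := fun X h => by
    rw [← Matrix.mul_assoc, h.1]
  have idem' : ∀ X : Mat m n, InS K X → (K * X) * (K * X) = K * X := fun X h => by
    rw [Matrix.mul_assoc, ← Matrix.mul_assoc X, h.1]
  obtain ⟨-, r2⟩ := aux_res (X1 * K) (X2 * K) (X1' * K) (X2' * K) p1 q1 p2 q2 h1 h2 h3 h4 h5 h6
    (fun l a b => (hLax l a b).1)
  obtain ⟨r1, -⟩ := aux_res (K * X1) (K * X2) (K * X1') (K * X2') p1 q1 p2 q2 h1 h2 h3 h4 h5 h6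
    (fun l a b => (hLax l a b).2)
  have s1 := (hLax p1 h2 h1).1
  have s2 := (hLax q2 h6.symm h5.symm).2
  have i1 : Amat K p2 q2 p1 X2 * Bmat K p2 q2 p1 X2 = 1 := aux_inv _ (idem _ hX2) _ _ _ h2 h3
  have i2 : Atil K p2 q2 q1 X2' * Btil K p2 q2 q1 X2' = 1 := aux_inv _ (idem' _ hX2') _ _ _ h4 h5
  have i3 : Amat K p1 q1 p2 X1' * Bmat K p1 q1 p2 X1' = 1 :=
    aux_inv _ (idem _ hX1') _ _ _ h2.symm h4.symm
  have i4 : Atil K p1 q1 q2 X1 * Btil K p1 q1 q2 X1 = 1 :=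
    aux_inv _ (idem' _ hX1) _ _ _ h3.symm h5.symm
  have A1 : Amat K p1 q1 p1 X1 = 1 - X1 * K := by
    rw [Amat, div_self (sub_ne_zero.2 h1), one_smul]
  have A1' : Amat K p1 q1 p1 X1' = 1 - X1' * K := by
    rw [Amat, div_self (sub_ne_zero.2 h1), one_smul]
  have hm1 : (p2 - q2) / (q2 - p2) = -1 := by
    rw [← neg_sub q2 p2, neg_div, div_self (sub_ne_zero.2 h6.symm)]
  have B2 : Btil K p2 q2 q2 X2 = 1 - K * X2 := by
    rw [Btil, hm1, neg_one_smul, sub_eq_add_neg]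
  have B2' : Btil K p2 q2 q2 X2' = 1 - K * X2' := by
    rw [Btil, hm1, neg_one_smul, sub_eq_add_neg]
  rw [A1, A1'] at s1
  rw [B2, B2'] at s2
  change K * X1 * Btil K p2 q2 q1 X2 = Btil K p2 q2 q1 X2' * (K * X1') at r1
  change Amat K p1 q1 p2 X1 * (X2 * K) = X2' * K * Amat K p1 q1 p2 X1' at r2
  refine Prod.ext ?_ ?_
  · refine aux_final K X1 X1' hX1 hX1' _ (X1' * Atil K p2 q2 q1 X2' * K) _
      (K * Bmat K p2 q2 p1 X2 * X1') ?_ ?_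
    · have e : (1 - X1 * K) * Bmat K p2 q2 p1 X2 * X1' = 0 := by
        rw [s1, Matrix.mul_assoc, Matrix.sub_mul, Matrix.one_mul, hX1'.1, sub_self,
          Matrix.mul_zero]
      rw [Matrix.sub_mul, Matrix.sub_mul, Matrix.one_mul, sub_eq_zero] at e
      calc X1' = Amat K p2 q2 p1 X2 * Bmat K p2 q2 p1 X2 * X1' := by rw [i1, Matrix.one_mul]
        _ = Amat K p2 q2 p1 X2 * (X1 * K * Bmat K p2 q2 p1 X2 * X1') := by
          rw [Matrix.mul_assoc, e]
        _ = _ := by simp only [Matrix.mul_assoc]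
    · calc X1' = X1' * (Atil K p2 q2 q1 X2' * Btil K p2 q2 q1 X2') * (K * X1') := by
            rw [i2, Matrix.mul_one, ← Matrix.mul_assoc, hX1'.1]
        _ = X1' * Atil K p2 q2 q1 X2' * (Btil K p2 q2 q1 X2' * (K * X1')) := by
          simp only [Matrix.mul_assoc]
        _ = _ := by rw [← r1]; simp only [Matrix.mul_assoc]
  · refine aux_final K X2 X2' hX2 hX2' _ (X2' * Atil K p1 q1 q2 X1 * K) _
      (K * Bmat K p1 q1 p2 X1' * X2') ?_ ?_
    · calc X2' = X2' * K * (Amat K p1 q1 p2 X1' * Bmat K p1 q1 p2 X1') * X2' := by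
            rw [i3, Matrix.mul_one, hX2'.1]
        _ = X2' * K * Amat K p1 q1 p2 X1' * (Bmat K p1 q1 p2 X1' * X2') := by
          simp only [Matrix.mul_assoc]
        _ = _ := by rw [← r2]; simp only [Matrix.mul_assoc]
    · have e : X2' * (Atil K p1 q1 q2 X1 * (1 - K * X2)) = 0 := by
        rw [s2, ← Matrix.mul_assoc, Matrix.mul_sub, Matrix.mul_one, ← Matrix.mul_assoc, hX2'.1,
          sub_self, Matrix.zero_mul]
      rw [Matrix.mul_sub, Matrix.mul_sub, Matrix.mul_one, sub_eq_zero] at e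
      calc X2' = X2' * Atil K p1 q1 q2 X1 * Btil K p1 q1 q2 X1 := by
            rw [Matrix.mul_assoc, i4, Matrix.mul_one]
        _ = X2' * (Atil K p1 q1 q2 X1 * (K * X2)) * Btil K p1 q1 q2 X1 := by rw [← e]
        _ = _ := by simp only [Matrix.mul_assoc]
end

section
/- Let p1, q1, p2, q2 be pairwise distinct reals and X1, X2 ∈ S, with the trace denominators below nonzero. Then Tinv(p1,q1;p2,q2)(T(p1,q1;p2,q2)(X1,X2)) = (X1,X2), where Tinv(p1,q1;p2,q2)(X1,X2) = (B2(q1,X2) X1 Ã2(p1,X2) / tr[B2(q1,X2) X1 Ã2(p1,X2) K], B1(q2,X1) X2 Ã1(p2,X1) / tr[B1(q2,X1) X2 Ã1(p2,X1) K]); that is, Tinv is the inverse of T. -/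
open Matrix

lemma InS_decomp {m n : ℕ} (K : Matrix (Fin n) (Fin m) ℝ) (X : Mat m n) (h : InS K X) :
    ∃ (u : Fin m → ℝ) (v : Fin n → ℝ), X = vecMulVec u v ∧ v ⬝ᵥ (K *ᵥ u) = 1 := by
  obtain ⟨h1, h2⟩ := h
  have hX0 : X ≠ 0 := by
    rintro rfl
    simp at h2
  obtain ⟨w, -, hw⟩ := finrank_eq_one_iff'.1 h2
  have hc : ∀ j, ∃ c : ℝ, c • (w : Fin m → ℝ) = X *ᵥ Pi.single j 1 := by
    intro j
    obtain ⟨c, hc⟩ := hw ⟨X *ᵥ Pi.single j 1, ⟨Pi.single j 1, rfl⟩⟩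
    exact ⟨c, congrArg Subtype.val hc⟩
  choose v hv using hc
  have hX : X = vecMulVec (w : Fin m → ℝ) v := by
    ext i j
    have := congrFun (hv j) i
    simp at this
    simp [vecMulVec_apply, ← this, mul_comm]
  refine ⟨w, v, hX, ?_⟩
  generalize (w : Fin m → ℝ) = u at hX
  have h3 : (v ⬝ᵥ (K *ᵥ u)) • X = X := by
    conv_rhs => rw [← h1]
    rw [hX, Matrix.mul_assoc, mul_vecMulVec, vecMulVec_mul_vecMulVec]
    simp [vecMulVec_smul, smul_vecMulVec]
  have h4 : (v ⬝ᵥ (K *ᵥ u) - 1) • X = 0 := by rw [sub_smul, h3, one_smul, sub_self]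
  rcases smul_eq_zero.1 h4 with h5 | h5
  · linarith
  · exact absurd h5 hX0

lemma Amat_mulVec {m n : ℕ} (K : Matrix (Fin n) (Fin m) ℝ) (p q l : ℝ)
    (u w : Fin m → ℝ) (v : Fin n → ℝ) :
    Amat K p q l (vecMulVec u v) *ᵥ w = w - ((p - q) / (l - q) * (v ⬝ᵥ (K *ᵥ w))) • u := by
  simp only [Amat, sub_mulVec, one_mulVec, smul_mulVec, ← mulVec_mulVec, vecMulVec_mulVec,
    op_smul_eq_smul, smul_smul]

lemma Bmat_mulVec {m n : ℕ} (K : Matrix (Fin n) (Fin m) ℝ) (p q l : ℝ)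
    (u w : Fin m → ℝ) (v : Fin n → ℝ) :
    Bmat K p q l (vecMulVec u v) *ᵥ w = w + ((p - q) / (l - p) * (v ⬝ᵥ (K *ᵥ w))) • u := by
  simp only [Bmat, add_mulVec, one_mulVec, smul_mulVec, ← mulVec_mulVec, vecMulVec_mulVec,
    op_smul_eq_smul, smul_smul]

lemma vecMul_Atil {m n : ℕ} (K : Matrix (Fin n) (Fin m) ℝ) (p q l : ℝ)
    (u : Fin m → ℝ) (v w : Fin n → ℝ) :
    w ᵥ* Atil K p q l (vecMulVec u v) = w - ((p - q) / (l - q) * (w ⬝ᵥ (K *ᵥ u))) • v := by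
  simp only [Atil, vecMul_sub, vecMul_one, vecMul_smul, mul_vecMulVec, vecMul_vecMulVec,
    smul_smul]

lemma vecMul_Btil {m n : ℕ} (K : Matrix (Fin n) (Fin m) ℝ) (p q l : ℝ)
    (u : Fin m → ℝ) (v w : Fin n → ℝ) :
    w ᵥ* Btil K p q l (vecMulVec u v) = w + ((p - q) / (l - p) * (w ⬝ᵥ (K *ᵥ u))) • v := by
  simp only [Btil, vecMul_add, vecMul_one, vecMul_smul, mul_vecMulVec, vecMul_vecMulVec,
    smul_smul]

lemma trace_vmv_mul {m n : ℕ} (K : Matrix (Fin n) (Fin m) ℝ) (u : Fin m → ℝ) (v : Fin n → ℝ) :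
    (vecMulVec u v * K).trace = v ⬝ᵥ (K *ᵥ u) := by
  rw [vecMulVec_mul, trace_vecMulVec, dotProduct_comm, dotProduct_mulVec]

lemma first_comp {m n : ℕ} (K : Matrix (Fin n) (Fin m) ℝ) (p1 q1 p2 q2 : ℝ)
    (h1 : p1 - q2 ≠ 0) (h2 : q1 - p2 ≠ 0)
    (X1 X2 : Mat m n) (hX1 : InS K X1) (hX2 : InS K X2)
    (hd1 : Tden1 K p1 q1 p2 q2 X1 X2 ≠ 0)
    (hd3 : Tinvden1 K p1 q1 p2 q2 (Tmap K p1 q1 p2 q2 (X1, X2)).1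
      (Tmap K p1 q1 p2 q2 (X1, X2)).2 ≠ 0) :
    (Tinvmap K p1 q1 p2 q2 (Tmap K p1 q1 p2 q2 (X1, X2))).1 = X1 := by
  have h1' : q2 - p1 ≠ 0 := fun h => h1 (by linarith)
  have h2' : p2 - q1 ≠ 0 := fun h => h2 (by linarith)
  obtain ⟨u1, v1, rfl, e1⟩ := InS_decomp K X1 hX1
  obtain ⟨u2, v2, rfl, e2⟩ := InS_decomp K X2 hX2
  obtain ⟨a, ha⟩ : ∃ a, a = v1 ⬝ᵥ (K *ᵥ u2) := ⟨_, rfl⟩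
  obtain ⟨b, hb⟩ : ∃ b, b = v2 ⬝ᵥ (K *ᵥ u1) := ⟨_, rfl⟩
  obtain ⟨D, hD⟩ : ∃ D, D = 1 + (p1 - q1) * (p2 - q2) / ((p1 - q2) * (q1 - p2)) * (a * b) :=
    ⟨_, rfl⟩
  have hDen1 : Tden1 K p1 q1 p2 q2 (vecMulVec u1 v1) (vecMulVec u2 v2) = D := by
    rw [Tden1, mul_vecMulVec, Matrix.vecMulVec_mul, trace_vmv_mul, Amat_mulVec, vecMul_Btil]
    simp only [mulVec_sub, mulVec_smul, dotProduct_sub, add_dotProduct, smul_dotProduct,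
      dotProduct_smul, smul_eq_mul, e1, e2, ← ha, ← hb, hD]
    field_simp
    ring
  have hDen2 : Tden2 K p1 q1 p2 q2 (vecMulVec u1 v1) (vecMulVec u2 v2) = D := by
    rw [Tden2, mul_vecMulVec, Matrix.vecMulVec_mul, trace_vmv_mul, Amat_mulVec, vecMul_Btil]
    simp only [mulVec_sub, mulVec_smul, dotProduct_sub, add_dotProduct, smul_dotProduct,
      dotProduct_smul, smul_eq_mul, e1, e2, ← ha, ← hb, hD]
    rw [show q2 - p1 = -(p1 - q2) by ring, show p2 - q1 = -(q1 - p2) by ring]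
    field_simp
    ring
  rw [hDen1] at hd1
  have hT : Tmap K p1 q1 p2 q2 (vecMulVec u1 v1, vecMulVec u2 v2) =
      (D⁻¹ • vecMulVec (u1 - ((p2 - q2) / (p1 - q2) * b) • u2)
          (v1 + ((p2 - q2) / (q1 - p2) * a) • v2),
        vecMulVec (D⁻¹ • (u2 - ((p1 - q1) / (p2 - q1) * a) • u1))
          (v2 + ((p1 - q1) / (q2 - p1) * b) • v1)) := by
    simp only [Tmap, hDen1, hDen2, mul_vecMulVec, Matrix.vecMulVec_mul, Amat_mulVec, vecMul_Btil,
      ← ha, ← hb, smul_vecMulVec]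
  rw [hT] at hd3 ⊢
  have hu : ∃ κ : ℝ, Bmat K p2 q2 q1 (vecMulVec (D⁻¹ • (u2 - ((p1 - q1) / (p2 - q1) * a) • u1))
      (v2 + ((p1 - q1) / (q2 - p1) * b) • v1)) *ᵥ (u1 - ((p2 - q2) / (p1 - q2) * b) • u2)
      = κ • u1 := by
    obtain ⟨b', hb'⟩ : ∃ b', b' = (p2 - q2) / (q1 - p2) *
      ((v2 + ((p1 - q1) / (q2 - p1) * b) • v1) ⬝ᵥ
        (K *ᵥ (u1 - ((p2 - q2) / (p1 - q2) * b) • u2))) := ⟨_, rfl⟩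
    have hk : b' = (p2 - q2) / (p1 - q2) * b * D := by
      rw [hb']
      simp only [mulVec_sub, mulVec_smul, dotProduct_sub, add_dotProduct, smul_dotProduct,
        dotProduct_smul, smul_eq_mul, e1, e2, ← ha, ← hb, hD]
      rw [show q2 - p1 = -(p1 - q2) by ring]
      field_simp
      ring
    refine ⟨1 - (p2 - q2) / (p1 - q2) * b * ((p1 - q1) / (p2 - q1) * a), ?_⟩
    rw [Bmat_mulVec, ← hb', hk, smul_smul, mul_assoc _ D, mul_inv_cancel₀ hd1, mul_one]
    module
  have hv : ∃ μ : ℝ, (v1 + ((p2 - q2) / (q1 - p2) * a) • v2) ᵥ*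
      Atil K p2 q2 p1 (vecMulVec (D⁻¹ • (u2 - ((p1 - q1) / (p2 - q1) * a) • u1))
      (v2 + ((p1 - q1) / (q2 - p1) * b) • v1)) = μ • v1 := by
    obtain ⟨a', ha'⟩ : ∃ a', a' = (p2 - q2) / (p1 - q2) *
      ((v1 + ((p2 - q2) / (q1 - p2) * a) • v2) ⬝ᵥ
        (K *ᵥ (D⁻¹ • (u2 - ((p1 - q1) / (p2 - q1) * a) • u1)))) := ⟨_, rfl⟩
    have hk : a' = (p2 - q2) / (q1 - p2) * a := by
      have : a' = D⁻¹ * ((p2 - q2) / (q1 - p2) * a * D) := by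
        rw [ha', mulVec_smul, dotProduct_smul, smul_eq_mul, mul_left_comm]
        congr 1
        simp only [mulVec_sub, mulVec_smul, dotProduct_sub, add_dotProduct, smul_dotProduct,
          dotProduct_smul, smul_eq_mul, e1, e2, ← ha, ← hb, hD]
        rw [show p2 - q1 = -(q1 - p2) by ring]
        field_simp
        ring
      rw [this]
      field_simp
    refine ⟨1 - (p2 - q2) / (q1 - p2) * a * ((p1 - q1) / (q2 - p1) * b), ?_⟩
    rw [vecMul_Atil, ← ha', hk]
    module
  obtain ⟨κ, hκ⟩ := hu
  obtain ⟨μ, hμ⟩ := hv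
  generalize vecMulVec (D⁻¹ • (u2 - ((p1 - q1) / (p2 - q1) * a) • u1))
    (v2 + ((p1 - q1) / (q2 - p1) * b) • v1) = Y2 at hκ hμ hd3 ⊢
  simp only [Tinvmap, Tinvden1, Matrix.mul_smul, Matrix.smul_mul, mul_vecMulVec,
    Matrix.vecMulVec_mul _ _ (Atil _ _ _ _ _), hκ, hμ, trace_smul, smul_vecMulVec,
    vecMulVec_smul, trace_vmv_mul, e1] at hd3 ⊢
  simp only [smul_smul, smul_eq_mul, mul_one] at hd3 ⊢
  rw [← mul_assoc] at hd3
  convert one_smul ℝ _ using 2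
  rw [← mul_assoc D⁻¹]
  exact inv_mul_cancel₀ hd3

/-- the explicit map `Tinv` inverts `T`: `Tinv(T(X1,X2)) = (X1,X2)`. -/
theorem Tinv_inverts_T
    (m n : ℕ) (hm : 0 < m) (hn : 0 < n)
    (K : Matrix (Fin n) (Fin m) ℝ) (hK : K.rank = min n m)
    (p1 q1 p2 q2 : ℝ)
    (hdist : List.Pairwise (· ≠ ·) [p1, q1, p2, q2])
    (X1 X2 : Mat m n) (hX1 : InS K X1) (hX2 : InS K X2)
    (hd1 : Tden1 K p1 q1 p2 q2 X1 X2 ≠ 0)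
    (hd2 : Tden2 K p1 q1 p2 q2 X1 X2 ≠ 0)
    (hd3 : Tinvden1 K p1 q1 p2 q2 (Tmap K p1 q1 p2 q2 (X1, X2)).1
      (Tmap K p1 q1 p2 q2 (X1, X2)).2 ≠ 0)
    (hd4 : Tinvden2 K p1 q1 p2 q2 (Tmap K p1 q1 p2 q2 (X1, X2)).1
      (Tmap K p1 q1 p2 q2 (X1, X2)).2 ≠ 0) :
    Tinvmap K p1 q1 p2 q2 (Tmap K p1 q1 p2 q2 (X1, X2)) = (X1, X2) := by
  simp only [List.pairwise_cons, List.mem_cons, List.not_mem_nil, or_false,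
    forall_eq_or_imp, forall_eq] at hdist
  obtain ⟨⟨_, _, h14⟩, ⟨h23, _⟩, _⟩ := hdist
  refine Prod.ext ?_ ?_
  · exact first_comp K p1 q1 p2 q2 (sub_ne_zero.2 h14) (sub_ne_zero.2 h23) X1 X2 hX1 hX2 hd1 hd3
  · exact first_comp K p2 q2 p1 q1 (sub_ne_zero.2 h23.symm) (sub_ne_zero.2 h14.symm)
      X2 X1 hX2 hX1 hd2 hd4
end
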